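/- arXiv:2512.04633 — 2 statements merged into one kernel-verified Lean document; each statement's English description precedes it below -/
import Mathlib

section
/- Let K ⊆ ℝ² be a convex body, C ⊆ ℝ² a 0-symmetric convex body, and suppose K is pseudo-complete with respect to C. Then D(K,C)/w(K,C) ≤ (φ+1)/2, where φ = (1+√5)/2. -/
open scoped Pointwise RealInnerProductSpace
open Set

noncomputable section

abbrev E2 := EuclideanSpace ℝ (Fin 2)

/-- A convex body: compact convex set with nonempty interior. -/
def IsConvexBody (K : Set E2) : Prop :=
  Convex ℝ K ∧ IsCompact K ∧ (interior K).Nonempty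

/-- circumradius `R(K,C)` -/
def circum (K C : Set E2) : ℝ :=
  sInf {ρ : ℝ | 0 < ρ ∧ ∃ t : E2, K ⊆ ρ • C + {t}}

/-- inradius `r(K,C)` -/
def inrad (K C : Set E2) : ℝ :=
  sSup {ρ : ℝ | 0 < ρ ∧ ∃ t : E2, ρ • C + {t} ⊆ K}

/-- width `w(K,C)` -/
def widthB (K C : Set E2) : ℝ := 2 * inrad (K - K) (C - C)

/-- diameter `D(K,C)` -/
def diamB (K C : Set E2) : ℝ := 2 * circum (K - K) (C - C)

/-- Minkowski asymmetry `s(K)` -/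
def minkAsym (K : Set E2) : ℝ :=
  sInf {ρ : ℝ | 0 < ρ ∧ ∃ c : E2, K - {c} ⊆ ρ • ({c} - K)}

/-- `K` is Minkowski centered -/
def MinkCentered (K : Set E2) : Prop := K ⊆ minkAsym K • (-K)

/-- `τ(K)`: smallest `ρ > 0` with `K ∩ (-K) ⊆ ρ • ((K-K)/2)` -/
def tauB (K : Set E2) : ℝ :=
  sInf {ρ : ℝ | 0 < ρ ∧ K ∩ (-K) ⊆ ρ • ((2:ℝ)⁻¹ • (K - K))}

/-- golden ratio -/
def phiR : ℝ := (1 + Real.sqrt 5) / 2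

def cExpr2 (s : ℝ) : ℝ :=
  (s^2+1)^2 / ((s^2-1) * (s^2+2*s-1+2*Real.sqrt (s*(s^2-1))))

def cExpr3 (s : ℝ) : ℝ := 2*(s^2-2*s-1) / ((s-3)*(s+1))

/-- `ŝ`: the unique `s ∈ (φ,2)` where the two expressions agree. -/
def sHat : ℝ := sInf {s : ℝ | phiR < s ∧ s < 2 ∧ cExpr2 s = cExpr3 s}

def cFun (s : ℝ) : ℝ :=
  if s ≤ phiR then 1 else if s ≤ sHat then cExpr2 s else cExpr3 s

/-- polar body -/
def polarBody (K : Set E2) : Set E2 := {y | ∀ x ∈ K, (inner ℝ x y : ℝ) ≤ 1}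

/-- `γ(K)` -/
def gammaB (K : Set E2) : ℝ :=
  sInf {ρ : ℝ | 0 < ρ ∧
    polarBody ((2:ℝ)⁻¹ • (polarBody K - polarBody K)) ⊆ ρ • convexHull ℝ (K ∪ -K)}

/-- positive hull of two points -/
def posHull2 (a b : E2) : Set E2 := {x | ∃ α β : ℝ, 0 ≤ α ∧ 0 ≤ β ∧ x = α • a + β • b}

/-- asymmetry point of `K`: a point of `bd(K) ∩ bd(−(1/s(K))·K)` -/
def IsAsymPoint (K : Set E2) (p : E2) : Prop :=
  p ∈ frontier K ∧ p ∈ frontier ((-(minkAsym K)⁻¹) • K)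

/-- a well-spread triple of asymmetry points -/
def WellSpread (K : Set E2) (p1 p2 p3 : E2) : Prop :=
  IsAsymPoint K p1 ∧ IsAsymPoint K p2 ∧ IsAsymPoint K p3 ∧
  ∃ a1 a2 a3 : E2, a1 ≠ 0 ∧ a2 ≠ 0 ∧ a3 ≠ 0 ∧
    (∀ x ∈ K, (inner ℝ a1 x : ℝ) ≤ inner ℝ a1 p1) ∧
    (∀ x ∈ K, (inner ℝ a2 x : ℝ) ≤ inner ℝ a2 p2) ∧
    (∀ x ∈ K, (inner ℝ a3 x : ℝ) ≤ inner ℝ a3 p3) ∧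
    (0:E2) ∈ interior (convexHull ℝ {p1, p2, p3}) ∧
    (0:E2) ∈ convexHull ℝ {a1, a2, a3}

/-- two points of `bd(K) ∩ bd(-K)` are consecutive -/
def Consecutive (K : Set E2) (z1 z2 : E2) : Prop :=
  ¬ ∃ z, z ∈ frontier K ∩ frontier (-K) ∧ z ∈ interior (posHull2 z1 z2)

/-- point of the plane from coordinates -/
def pt (x y : ℝ) : E2 := (WithLp.equiv 2 (Fin 2 → ℝ)).symm ![x, y]

/-- the golden house -/
def goldenHouse : Set E2 :=
  convexHull ℝ {pt 1 0, pt (-1) 0, pt 1 (-1), pt (-1) (-1), pt 0 phiR}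



set_option maxHeartbeats 2000000 in
lemma real_core (φ s α β l1 l2 l3 u v g : ℝ) (hφ : φ ^ 2 = φ + 1) (hφ1 : 1 < φ) (hs : φ ≤ s)
    (hβ : 0 ≤ β) (hαβ : β ≤ α) (h1 : 0 < l1) (h2 : 0 < l2)
    (hsum : l1 + l2 + l3 = 1) (k2 : l2 * (s + 1) ≤ 1)
    (k3 : l3 * (s + 1) ≤ 1) (hu : l2 * u ≤ l3 - s * l1) (hv : l1 * v ≤ l3 - s * l2)
    (hg0 : 0 ≤ g) (hg : g ≤ α + β) :
    2 * (s + 1) * (2 - φ) * g ≤ g - (β * u - α * s) ∨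
    2 * (s + 1) * (2 - φ) * g ≤ (β * s - α * v) - (β * u - α * s) := by
  have hs0 : 0 < s := by linarith
  have hφ2 : 0 ≤ 2 - φ := by nlinarith
  have hw1 : 2 * (s + 1) * (2 - φ) ≤ 1 + (s - 1 / s) := by
    have : (1 + s) * (2 * φ - 3) - 1 / s = ((1 + s) * s * (2 * φ - 3) - 1) / s := by
      field_simp
    have h3 : 0 ≤ ((1 + s) * s * (2 * φ - 3) - 1) / s := by
      apply div_nonneg _ hs0.le
      have e : (1 + φ) * φ * (2 * φ - 3) = 1 := by
        have : φ ^ 3 = φ * (φ + 1) := by rw [← hφ]; ring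
        nlinarith
      have : 0 ≤ 2 * φ - 3 := by nlinarith
      have : (1 + φ) * φ ≤ (1 + s) * s := by nlinarith
      nlinarith
    linarith
  have hw2 : 2 * (s + 1) * (2 - φ) ≤ 2 * (s - 1 / s) := by
    have : (s - 1 / s) - (s + 1) * (2 - φ) = (s + 1) * (s * (φ - 1) - 1) / s := by
      field_simp
      ring
    have h3 : 0 ≤ (s + 1) * (s * (φ - 1) - 1) / s := by
      apply div_nonneg _ hs0.le
      apply mul_nonneg (by linarith)
      nlinarith
    linarith
  have hss : 0 ≤ s - 1 / s := by
    have : 0 ≤ 2 * (s + 1) * (2 - φ) := by positivity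
    linarith
  have hu' : u ≤ (1 - s + s * l2) / l2 := by
    rw [le_div_iff₀ h2]; nlinarith
  have hu2 : u ≤ (l3 - s * l1) / l2 := by
    rw [le_div_iff₀ h2]; nlinarith
  have hv2 : v ≤ (l3 - s * l2) / l1 := by
    rw [le_div_iff₀ h1]; nlinarith
  by_cases hc : l2 * (s + 1) ≤ s / 2
  · left
    have hu3 : u ≤ s - 2 * (s - 1) * (s + 1) / s := by
      refine hu'.trans ?_
      rw [div_le_iff₀ h2]
      have : 2 * (s - 1) * (s + 1) / s * l2 = (s - 1) * (l2 * (s + 1) / (s / 2)) := by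
        field_simp
      have h5 : l2 * (s + 1) / (s / 2) ≤ 1 := by
        rw [div_le_one (by linarith)]; exact hc
      nlinarith
    have e : s - 2 * (s - 1) * (s + 1) / s = - s + 2 / s := by
      field_simp
      ring
    rw [e] at hu3
    have h6 : β * u ≤ β * (- s + 2 / s) := mul_le_mul_of_nonneg_left hu3 hβ
    have h7 : (α + β) * (s - 1 / s) ≤ α * s - β * u := by
      have : 0 ≤ 1 / s := by positivity
      have e2 : (2:ℝ) / s = 2 * (1 / s) := by ring
      rw [e2] at h6
      nlinarith
    have h8 : g * (s - 1 / s) ≤ (α + β) * (s - 1 / s) := mul_le_mul_of_nonneg_right hg hss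
    nlinarith
  · right
    push Not at hc
    -- m = s/(s+1) - l2
    set m := s / (s + 1) - l2 with hm
    have hms : (m + l2) * (s + 1) = s := by rw [hm]; field_simp; ring
    have hmpos : 0 < m := by
      by_contra hh
      push Not at hh
      nlinarith
    have hml1 : m ≤ l1 := by
      by_contra hh
      push Not at hh
      nlinarith
    have hml2 : m ≤ l2 := by
      by_contra hh
      push Not at hh
      nlinarith
    have hu4 : (s - 1) / l2 ≤ s - u := by
      have : (s - 1) / l2 = s - (1 - s + s * l2) / l2 := by field_simp; ring
      linarith
    have hv4 : (s - 1) / m ≤ s - v := by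
      have h9 : (s - 1) / m ≤ (s * l1 + s * l2 - l3) / l1 := by
        rw [div_le_div_iff₀ hmpos h1]
        have e3 : l3 = 1 - l1 - l2 := by linarith
        have e4 : s - 1 = (m + l2) * (s + 1) - 1 := by rw [hms]
        have : s * l1 + s * l2 - l3 = (s + 1) * (l1 + l2) - 1 := by rw [e3]; ring
        rw [this, e4]
        nlinarith [mul_nonneg (sub_nonneg.2 hml1) (sub_nonneg.2 k2)]
      have : (s * l1 + s * l2 - l3) / l1 = s - (l3 - s * l2) / l1 := by field_simp; ring
      linarith
    have hsum2 : 4 * (s + 1) / s ≤ 1 / m + 1 / l2 := by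
      have e5 : 1 / m + 1 / l2 = (m + l2) / (m * l2) := by field_simp; ring
      have e6 : m + l2 = s / (s + 1) := by rw [hm]; ring
      have e7 : 4 * (s + 1) / s = 4 / (m + l2) := by rw [e6]; field_simp
      rw [e5, e7, div_le_div_iff₀ (by linarith) (by positivity)]
      nlinarith [sq_nonneg (m - l2)]
    have h10 : 1 / l2 ≤ 1 / m := one_div_le_one_div_of_le hmpos hml2
    have h11 : (α + β) * (2 * (s + 1) / s) ≤ α * (1 / m) + β * (1 / l2) := by
      have e8 : 4 * (s + 1) / s = 2 * (2 * (s + 1) / s) := by ring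
      rw [e8] at hsum2
      nlinarith [mul_nonneg (sub_nonneg.2 hαβ) (sub_nonneg.2 h10)]
    have h12 : α * ((s - 1) / m) + β * ((s - 1) / l2) ≤ α * (s - v) + β * (s - u) := by
      have := mul_le_mul_of_nonneg_left hu4 hβ
      have := mul_le_mul_of_nonneg_left hv4 (hβ.trans hαβ)
      linarith
    have h13 : (s - 1) * ((α + β) * (2 * (s + 1) / s)) ≤ α * ((s - 1) / m) + β * ((s - 1) / l2) := by
      have := mul_le_mul_of_nonneg_left h11 (by linarith : 0 ≤ s - 1)
      calc _ ≤ _ := this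
        _ = _ := by ring
    have e9 : (s - 1) * ((α + β) * (2 * (s + 1) / s)) = (α + β) * (2 * (s - 1 / s)) := by
      field_simp
      ring
    have h14 : g * (2 * (s - 1 / s)) ≤ (α + β) * (2 * (s - 1 / s)) :=
      mul_le_mul_of_nonneg_right hg (by linarith)
    nlinarith

lemma core3 (K : Set E2) (φ r R l1 l2 l3 α β : ℝ) (a1 a2 a3 p1 p2 p3 x : E2)
    (hφ : φ ^ 2 = φ + 1) (hφ1 : 1 < φ) (hr : 0 < r) (hs : φ * r ≤ R)
    (hβ : 0 ≤ β) (hαβ : β ≤ α) (h1 : 0 < l1) (h2 : 0 < l2) (h3 : 0 < l3)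
    (hsum : l1 + l2 + l3 = 1) (hz : l1 • a1 + l2 • a2 + l3 • a3 = 0)
    (hp1 : p1 ∈ K) (hp2 : p2 ∈ K) (hp3 : p3 ∈ K)
    (e1 : inner ℝ a1 p1 = R) (e2 : inner ℝ a2 p2 = R) (e3 : inner ℝ a3 p3 = R)
    (g1 : ∀ y ∈ K, -r ≤ inner ℝ a1 y) (g2 : ∀ y ∈ K, -r ≤ inner ℝ a2 y)
    (g3 : ∀ y ∈ K, -r ≤ inner ℝ a3 y)
    (hx : r • x ∈ K) (x1 : |inner ℝ a1 x| ≤ 1) (x2 : |inner ℝ a2 x| ≤ 1) :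
    ∃ y ∈ K, ∃ z ∈ K, 2 * (2 - φ) * (r + R) * inner ℝ (β • a2 - α • a1) x ≤
      inner ℝ (β • a2 - α • a1) y - inner ℝ (β • a2 - α • a1) z := by
  have hφ2 : 0 ≤ 2 - φ := by nlinarith
  have hR : 0 < R := by nlinarith
  by_cases hneg : (inner ℝ (β • a2 - α • a1) x : ℝ) < 0
  · refine ⟨p1, hp1, p1, hp1, ?_⟩
    rw [sub_self]
    exact mul_nonpos_of_nonneg_of_nonpos (by positivity) hneg.le
  push Not at hneg
  have hzz : ∀ y : E2, l1 * inner ℝ a1 y + l2 * inner ℝ a2 y + l3 * inner ℝ a3 y = 0 := by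
    intro y
    have := congrArg (fun v => (inner ℝ v y : ℝ)) hz
    simpa [inner_add_left, real_inner_smul_left] using this
  have hlin : ∀ y : E2, (inner ℝ (β • a2 - α • a1) y : ℝ) = β * inner ℝ a2 y - α * inner ℝ a1 y := by
    intro y
    simp [inner_sub_left, real_inner_smul_left]
  have z1 := hzz p1
  have z2 := hzz p2
  have z3 := hzz p3
  rw [e1] at z1
  rw [e2] at z2
  rw [e3] at z3
  have k2 : l2 * (R / r + 1) ≤ 1 := by
    have : l2 * (R / r + 1) = (l2 * R + l2 * r) / r := by field_simp
    rw [this, div_le_one hr]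
    have := mul_le_mul_of_nonneg_left (g1 p2 hp2) h1.le
    have := mul_le_mul_of_nonneg_left (g3 p2 hp2) h3.le
    nlinarith
  have k3 : l3 * (R / r + 1) ≤ 1 := by
    have : l3 * (R / r + 1) = (l3 * R + l3 * r) / r := by field_simp
    rw [this, div_le_one hr]
    have := mul_le_mul_of_nonneg_left (g1 p3 hp3) h1.le
    have := mul_le_mul_of_nonneg_left (g2 p3 hp3) h2.le
    nlinarith
  have hu : l2 * (inner ℝ a2 p1 / r) ≤ l3 - R / r * l1 := by
    have : l3 - R / r * l1 - l2 * (inner ℝ a2 p1 / r) = (l3 * r - R * l1 - l2 * inner ℝ a2 p1) / r := by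
      field_simp
    have h5 : 0 ≤ (l3 * r - R * l1 - l2 * inner ℝ a2 p1) / r := by
      apply div_nonneg _ hr.le
      have := mul_le_mul_of_nonneg_left (g3 p1 hp1) h3.le
      linarith
    linarith
  have hv : l1 * (inner ℝ a1 p2 / r) ≤ l3 - R / r * l2 := by
    have : l3 - R / r * l2 - l1 * (inner ℝ a1 p2 / r) = (l3 * r - R * l2 - l1 * inner ℝ a1 p2) / r := by
      field_simp
    have h5 : 0 ≤ (l3 * r - R * l2 - l1 * inner ℝ a1 p2) / r := by
      apply div_nonneg _ hr.le
      have := mul_le_mul_of_nonneg_left (g3 p2 hp2) h3.le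
      linarith
    linarith
  have hg : (inner ℝ (β • a2 - α • a1) x : ℝ) ≤ α + β := by
    rw [hlin]
    have := mul_le_mul_of_nonneg_left (abs_le.1 x2).2 hβ
    have := mul_le_mul_of_nonneg_left (abs_le.1 x1).1 (hβ.trans hαβ)
    linarith
  have key := real_core φ (R / r) α β l1 l2 l3 (inner ℝ a2 p1 / r) (inner ℝ a1 p2 / r) _ hφ hφ1
    ((le_div_iff₀ hr).2 hs) hβ hαβ h1 h2 hsum k2 k3 hu hv hneg hg
  have ew : 2 * (2 - φ) * (r + R) * (inner ℝ (β • a2 - α • a1) x : ℝ)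
      = r * (2 * (R / r + 1) * (2 - φ) * inner ℝ (β • a2 - α • a1) x) := by
    field_simp
    ring
  rw [ew]
  rcases key with key | key
  · refine ⟨_, hx, p1, hp1, ?_⟩
    refine (mul_le_mul_of_nonneg_left key hr.le).trans (le_of_eq ?_)
    rw [real_inner_smul_right, hlin p1, e1]
    field_simp
  · refine ⟨p2, hp2, p1, hp1, ?_⟩
    refine (mul_le_mul_of_nonneg_left key hr.le).trans (le_of_eq ?_)
    rw [hlin p1, hlin p2, e1, e2]
    field_simp

lemma core3' (K : Set E2) (φ r R l1 l2 l3 α β : ℝ) (a1 a2 a3 p1 p2 p3 x : E2)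
    (hφ : φ ^ 2 = φ + 1) (hφ1 : 1 < φ) (hr : 0 < r) (hs : φ * r ≤ R)
    (hβ : 0 ≤ β) (hα : 0 ≤ α) (h1 : 0 < l1) (h2 : 0 < l2) (h3 : 0 < l3)
    (hsum : l1 + l2 + l3 = 1) (hz : l1 • a1 + l2 • a2 + l3 • a3 = 0)
    (hp1 : p1 ∈ K) (hp2 : p2 ∈ K) (hp3 : p3 ∈ K)
    (e1 : inner ℝ a1 p1 = R) (e2 : inner ℝ a2 p2 = R) (e3 : inner ℝ a3 p3 = R)
    (g1 : ∀ y ∈ K, -r ≤ inner ℝ a1 y) (g2 : ∀ y ∈ K, -r ≤ inner ℝ a2 y)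
    (g3 : ∀ y ∈ K, -r ≤ inner ℝ a3 y)
    (hx : r • x ∈ K) (hx' : r • (-x) ∈ K) (x1 : |inner ℝ a1 x| ≤ 1) (x2 : |inner ℝ a2 x| ≤ 1) :
    ∃ y ∈ K, ∃ z ∈ K, 2 * (2 - φ) * (r + R) * inner ℝ (β • a2 - α • a1) x ≤
      inner ℝ (β • a2 - α • a1) y - inner ℝ (β • a2 - α • a1) z := by
  rcases le_total β α with h | h
  · exact core3 K φ r R l1 l2 l3 α β a1 a2 a3 p1 p2 p3 x hφ hφ1 hr hs hβ h h1 h2 h3 hsum hz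
      hp1 hp2 hp3 e1 e2 e3 g1 g2 g3 hx x1 x2
  · obtain ⟨y, hy, z, hz, h⟩ := core3 K φ r R l2 l1 l3 β α a2 a1 a3 p2 p1 p3 (-x) hφ hφ1 hr hs hα h
      h2 h1 h3 (by linarith) (by rw [← hz]; abel)
      hp2 hp1 hp3 e2 e1 e3 g2 g1 g3 hx' (by simpa using x2) (by simpa using x1)
    refine ⟨z, hz, y, hy, ?_⟩
    have e : α • a1 - β • a2 = -(β • a2 - α • a1) := by abel
    rw [e] at h
    simp only [inner_neg_left, inner_neg_right] at h
    linarith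

lemma core_f (K : Set E2) (φ r R : ℝ) (l : Fin 3 → ℝ) (a p : Fin 3 → E2) (x f : E2)
    (hφ : φ ^ 2 = φ + 1) (hφ1 : 1 < φ) (hr : 0 < r) (hs : φ * r ≤ R)
    (hl : ∀ i, 0 < l i) (hsum : ∑ i, l i = 1) (hz : ∑ i, l i • a i = 0)
    (hp : ∀ i, p i ∈ K) (e : ∀ i, inner ℝ (a i) (p i) = R)
    (g : ∀ i, ∀ y ∈ K, -r ≤ inner ℝ (a i) y)
    (hx : r • x ∈ K) (hx' : r • (-x) ∈ K) (x1 : ∀ i, |inner ℝ (a i) x| ≤ 1)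
    (hf : ∃ c : Fin 3 → ℝ, f = ∑ i, c i • a i) :
    ∃ y ∈ K, ∃ z ∈ K, 2 * (2 - φ) * (r + R) * inner ℝ f x ≤ inner ℝ f y - inner ℝ f z := by
  obtain ⟨c, hc⟩ := hf
  have main : ∀ i j k : Fin 3, (∀ h : Fin 3 → ℝ, ∑ i, h i = h i + h j + h k) →
      (∀ h : Fin 3 → E2, ∑ i, h i = h i + h j + h k) → c i / l i ≤ c k / l k → c k / l k ≤ c j / l j →
      ∃ y ∈ K, ∃ z ∈ K, 2 * (2 - φ) * (r + R) * inner ℝ f x ≤ inner ℝ f y - inner ℝ f z := by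
    intro i j k s1 s2 h1 h2
    rw [s1] at hsum
    rw [s2] at hz hc
    have := core3' K φ r R (l i) (l j) (l k) (l i * (c k / l k - c i / l i))
      (l j * (c j / l j - c k / l k)) (a i) (a j) (a k) (p i) (p j) (p k) x hφ hφ1 hr hs
      (mul_nonneg (hl j).le (by linarith)) (mul_nonneg (hl i).le (by linarith)) (hl i) (hl j) (hl k)
      hsum hz (hp i) (hp j) (hp k) (e i) (e j) (e k) (g i) (g j) (g k) hx hx' (x1 i) (x1 j)
    have ef : (l j * (c j / l j - c k / l k)) • a j - (l i * (c k / l k - c i / l i)) • a i = f := by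
      have e1 : l j * (c j / l j - c k / l k) = c j - (c k / l k) * l j := by
        have := (hl j).ne'
        field_simp
      have e2 : l i * (c k / l k - c i / l i) = (c k / l k) * l i - c i := by
        have := (hl i).ne'
        field_simp
      have e3 : c k = (c k / l k) * l k := by
        have := (hl k).ne'
        field_simp
      have e4 : f = c i • a i + c j • a j + c k • a k - (c k / l k) • (l i • a i + l j • a j + l k • a k) := by
        rw [hz, smul_zero, sub_zero]; exact hc
      rw [e1, e2, e4]
      generalize c k / l k = κ at e3 ⊢
      rw [e3]
      module
    rw [ef] at this
    exact this
  rcases le_total (c 0 / l 0) (c 1 / l 1) with h01 | h01 <;>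
  rcases le_total (c 1 / l 1) (c 2 / l 2) with h12 | h12 <;>
  rcases le_total (c 0 / l 0) (c 2 / l 2) with h02 | h02
  · exact main 0 2 1 (fun h => by rw [Fin.sum_univ_three]; ring) (fun h => by rw [Fin.sum_univ_three]; abel) h01 h12
  · exact main 0 2 1 (fun h => by rw [Fin.sum_univ_three]; ring) (fun h => by rw [Fin.sum_univ_three]; abel) h01 h12
  · exact main 0 1 2 (fun h => by rw [Fin.sum_univ_three]) (fun h => by rw [Fin.sum_univ_three]) h02 h12
  · exact main 2 1 0 (fun h => by rw [Fin.sum_univ_three]; ring) (fun h => by rw [Fin.sum_univ_three]; abel) h02 h01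
  · exact main 1 2 0 (fun h => by rw [Fin.sum_univ_three]; ring) (fun h => by rw [Fin.sum_univ_three]; abel) h01 h02
  · exact main 1 0 2 (fun h => by rw [Fin.sum_univ_three]; ring) (fun h => by rw [Fin.sum_univ_three]; abel) h12 h02
  · exact main 2 0 1 (fun h => by rw [Fin.sum_univ_three]; ring) (fun h => by rw [Fin.sum_univ_three]; abel) h12 h01
  · exact main 2 0 1 (fun h => by rw [Fin.sum_univ_three]; ring) (fun h => by rw [Fin.sum_univ_three]; abel) h12 h01

/-- geometric core: given touching functionals with `0` in their convex hull -/
lemma core_geom (K C : Set E2) (φ r R : ℝ)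
    (hφ : φ ^ 2 = φ + 1) (hφ1 : 1 < φ) (hr : 0 < r) (hs : φ * r ≤ R)
    (hsym : ∀ x ∈ C, -x ∈ C)
    (hD : ∀ a ∈ polarBody C, ∀ x ∈ K, ∀ y ∈ K, (inner ℝ a (x - y) : ℝ) ≤ r + R)
    (hin : ∃ t, ∀ c ∈ C, r • c + t ∈ K) (hout : ∀ x ∈ K, ∃ c ∈ C, x = R • c)
    (h0 : (0 : E2) ∈ convexHull ℝ {a | a ∈ polarBody C ∧ ∃ p ∈ K, (inner ℝ a p : ℝ) = R})
    (f x : E2) (hx : x ∈ C) :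
    ∃ y ∈ K, ∃ z ∈ K, 2 * (2 - φ) * (r + R) * inner ℝ f x ≤ inner ℝ f y - inner ℝ f z := by
  have hR : 0 < R := by nlinarith
  have hrR : r < R := by nlinarith
  obtain ⟨ι, _, a, l, hN, hind, hl, hsum, hz⟩ := eq_pos_convex_span_of_mem_convexHull h0
  have hN' : ∀ i, a i ∈ polarBody C ∧ ∃ p ∈ K, (inner ℝ (a i) p : ℝ) = R := fun i => hN ⟨i, rfl⟩
  choose hP p hp e using hN'
  have g : ∀ i, ∀ y ∈ K, -r ≤ inner ℝ (a i) y := by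
    intro i y hy
    have := hD (a i) (hP i) (p i) (hp i) y hy
    rw [inner_sub_right, e] at this
    linarith
  have hcard : Fintype.card ι ≤ 3 := by
    have := hind.card_le_finrank_succ
    have h2 : Module.finrank ℝ (vectorSpan ℝ (Set.range a)) ≤ Module.finrank ℝ E2 :=
      Submodule.finrank_le _
    have h3 : Module.finrank ℝ E2 = 2 := by simp
    omega
  have hzz : ∀ y : E2, ∑ i, l i * inner ℝ (a i) y = 0 := by
    intro y
    have := congrArg (fun v => (inner ℝ v y : ℝ)) hz
    simpa [sum_inner, real_inner_smul_left] using this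
  have hcard3 : Fintype.card ι = 3 := by
    by_contra hne
    have hlt : Fintype.card ι ≤ 2 := by omega
    -- pick an index
    have hne' : Nonempty ι := by
      by_contra hem
      rw [not_nonempty_iff] at hem
      simp at hsum
    -- max weight argument
    obtain ⟨i, -, hi⟩ := Finset.exists_max_image Finset.univ l ⟨hne'.some, Finset.mem_univ _⟩
    have h1 := hzz (p i)
    classical
    rw [← Finset.add_sum_erase _ _ (Finset.mem_univ i), e] at h1
    have h2 : -(l i * r) ≤ ∑ j ∈ Finset.univ.erase i, l j * inner ℝ (a j) (p i) := by
      have hc1 : (Finset.univ.erase i).card ≤ 1 := by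
        rw [Finset.card_erase_of_mem (Finset.mem_univ i), Finset.card_univ]; omega
      have h3 : ∑ j ∈ Finset.univ.erase i, (-(l i * r)) ≤ ∑ j ∈ Finset.univ.erase i, l j * inner ℝ (a j) (p i) := by
        apply Finset.sum_le_sum
        intro j _
        have h4 := mul_le_mul_of_nonneg_left (g j (p i) (hp i)) (hl j).le
        have h5 := mul_le_mul_of_nonneg_right (hi j (Finset.mem_univ _)) hr.le
        linarith
      rw [Finset.sum_const, nsmul_eq_mul] at h3
      have h6 : (((Finset.univ.erase i).card : ℕ) : ℝ) ≤ 1 := by exact_mod_cast hc1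
      have h7 : 0 < l i * r := mul_pos (hl i) hr
      nlinarith
    have := mul_lt_mul_of_pos_left hrR (hl i)
    linarith
  obtain ⟨t, ht⟩ := hin
  have hat : ∀ i, 0 ≤ (inner ℝ (a i) t : ℝ) := by
    intro i
    obtain ⟨c, hc, hpc⟩ := hout (p i) (hp i)
    have h1 : (inner ℝ (a i) c : ℝ) = 1 := by
      have := e i
      rw [hpc, real_inner_smul_right] at this
      exact mul_left_cancel₀ hR.ne' (by linarith)
    have h2 := hD (a i) (hP i) (p i) (hp i) _ (ht _ (hsym c hc))
    rw [inner_sub_right, inner_add_right, real_inner_smul_right, inner_neg_right, e, h1] at h2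
    linarith
  have hat0 : ∀ i, (inner ℝ (a i) t : ℝ) = 0 := by
    intro i
    have h1 := (Finset.sum_eq_zero_iff_of_nonneg (fun j _ => mul_nonneg (hl j).le (hat j))).1 (hzz t) i
      (Finset.mem_univ _)
    exact (mul_eq_zero.1 h1).resolve_left (hl i).ne'
  have htop : affineSpan ℝ (Set.range a) = ⊤ := by
    rw [hind.affineSpan_eq_top_iff_card_eq_finrank_add_one, hcard3]; simp
  have hspan : ∀ v : E2, ∃ c : ι → ℝ, v = ∑ i, c i • a i := by
    intro v
    have : v ∈ affineSpan ℝ (Set.range a) := by rw [htop]; trivial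
    obtain ⟨w, hw, hv⟩ := eq_affineCombination_of_mem_affineSpan_of_fintype this
    refine ⟨w, ?_⟩
    rw [hv, Finset.affineCombination_eq_linear_combination _ _ _ hw]
  have ht0 : t = 0 := by
    obtain ⟨c, hc⟩ := hspan t
    rw [← inner_self_eq_zero (𝕜 := ℝ)]
    nth_rewrite 1 [hc]
    simp [sum_inner, real_inner_smul_left, hat0]
  subst ht0
  have eq := Fintype.equivFinOfCardEq hcard3
  refine core_f K φ r R (fun i => l (eq.symm i)) (fun i => a (eq.symm i)) (fun i => p (eq.symm i)) x f
    hφ hφ1 hr hs (fun i => hl _) ?_ ?_ (fun i => hp _) (fun i => e _) (fun i => g _) ?_ ?_ ?_ ?_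
  · rw [← hsum]; exact Equiv.sum_comp eq.symm l
  · rw [← hz]; exact Equiv.sum_comp eq.symm (fun i => l i • a i)
  · simpa using ht x hx
  · simpa using ht _ (hsym x hx)
  · intro i
    have h1 := hP (eq.symm i) x hx
    have h2 := hP (eq.symm i) _ (hsym x hx)
    rw [real_inner_comm] at h1 h2
    rw [inner_neg_right] at h2
    rw [abs_le]
    constructor <;> linarith
  · obtain ⟨c, hc⟩ := hspan f
    refine ⟨fun i => c (eq.symm i), ?_⟩
    rw [hc]; exact (Equiv.sum_comp eq.symm (fun i => c i • a i)).symm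

lemma compact_convexHull2 (N : Set E2) (hN : IsCompact N) : IsCompact (convexHull ℝ N) := by
  have hc : IsCompact ((fun q : (Fin 3 → ℝ) × (Fin 3 → E2) => ∑ i, q.1 i • q.2 i) ''
      (stdSimplex ℝ (Fin 3) ×ˢ Set.pi Set.univ (fun _ => N))) := by
    apply IsCompact.image
    · exact (isCompact_stdSimplex ℝ (Fin 3)).prod (isCompact_univ_pi fun _ => hN)
    · fun_prop
  convert! hc using 1
  apply Set.Subset.antisymm
  · intro x hx
    obtain ⟨ι, _, a, l, hr, hind, hl, hsum, hz⟩ := eq_pos_convex_span_of_mem_convexHull hx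
    have hcard : Fintype.card ι ≤ Fintype.card (Fin 3) := by
      have := hind.card_le_finrank_succ
      have h2 : Module.finrank ℝ (vectorSpan ℝ (Set.range a)) ≤ Module.finrank ℝ E2 :=
        Submodule.finrank_le _
      have h3 : Module.finrank ℝ E2 = 2 := by simp
      simp only [Fintype.card_fin]
      omega
    obtain ⟨g⟩ := Function.Embedding.nonempty_of_card_le hcard
    have hne : N.Nonempty := convexHull_nonempty_iff.1 ⟨x, hx⟩
    obtain ⟨z0, hz0⟩ := hne
    refine ⟨(Function.extend g l 0, Function.extend g a (fun _ => z0)), ⟨⟨?_, ?_⟩, ?_⟩, ?_⟩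
    · intro j
      by_cases h : ∃ i, g i = j
      · obtain ⟨i, rfl⟩ := h
        simp only [g.injective.extend_apply]; exact (hl i).le
      · simp [Function.extend_apply' _ _ _ h]
    · rw [← hsum]
      symm
      apply Fintype.sum_of_injective g g.injective
      · intro j hj
        exact Function.extend_apply' _ _ _ hj
      · intro i
        simp [g.injective.extend_apply]
    · intro j _
      by_cases h : ∃ i, g i = j
      · obtain ⟨i, rfl⟩ := h
        simp only [g.injective.extend_apply]; exact hr ⟨i, rfl⟩
      · simp only [Function.extend_apply' _ _ _ h]; exact hz0
    · rw [← hz]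
      symm
      apply Fintype.sum_of_injective g g.injective
      · intro j hj
        simp [Function.extend_apply' _ _ _ hj]
      · intro i
        simp [g.injective.extend_apply]
  · rintro _ ⟨⟨w, z⟩, ⟨hw, hz⟩, rfl⟩
    exact (convex_convexHull ℝ N).sum_mem (fun i _ => hw.1 i) hw.2
      (fun i _ => subset_convexHull ℝ N (hz i trivial))

lemma touch (K P : Set E2) (hK : IsCompact K) (hP : IsCompact P) (R : ℝ)
    (hle : ∀ a ∈ P, ∀ p ∈ K, (inner ℝ a p : ℝ) ≤ R)
    (hmin : ∀ v : E2, ∀ R' : ℝ, (∀ a ∈ P, ∀ p ∈ K, (inner ℝ a (p - v) : ℝ) ≤ R') → R ≤ R') :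
    (0 : E2) ∈ convexHull ℝ {a | a ∈ P ∧ ∃ p ∈ K, (inner ℝ a p : ℝ) = R} := by
  have hcont : Continuous (fun q : E2 × E2 => (inner ℝ q.1 q.2 : ℝ)) := by fun_prop
  have hN : IsCompact {a | a ∈ P ∧ ∃ p ∈ K, (inner ℝ a p : ℝ) = R} := by
    have h1 : IsCompact ((P ×ˢ K) ∩ {q : E2 × E2 | (inner ℝ q.1 q.2 : ℝ) = R}) :=
      (hP.prod hK).inter_right (isClosed_eq hcont continuous_const)
    convert! h1.image continuous_fst using 1
    ext a
    constructor
    · rintro ⟨ha, p, hp, h⟩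
      exact ⟨(a, p), ⟨⟨ha, hp⟩, h⟩, rfl⟩
    · rintro ⟨⟨a, p⟩, ⟨⟨ha, hp⟩, h⟩, rfl⟩
      exact ⟨ha, p, hp, h⟩
  by_contra h0
  obtain ⟨f, u, hu, hf⟩ := geometric_hahn_banach_point_closed (convex_convexHull ℝ _)
    (compact_convexHull2 _ hN).isClosed h0
  rw [map_zero] at hu
  set v := (InnerProductSpace.toDual ℝ E2).symm f with hv
  have hfv : ∀ a, f a = inner ℝ v a := fun a => (InnerProductSpace.toDual_symm_apply).symm
  have hMc : IsCompact ((P ×ˢ K) ∩ {q : E2 × E2 | (inner ℝ v q.1 : ℝ) ≤ u}) :=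
    (hP.prod hK).inter_right (isClosed_le (by fun_prop) continuous_const)
  obtain ⟨m, hmR, hm⟩ : ∃ m < R, ∀ a ∈ P, ∀ p ∈ K, (inner ℝ v a : ℝ) ≤ u → (inner ℝ a p : ℝ) ≤ m := by
    by_cases hne : ((P ×ˢ K) ∩ {q : E2 × E2 | (inner ℝ v q.1 : ℝ) ≤ u}).Nonempty
    · obtain ⟨⟨a, p⟩, ⟨⟨ha, hp⟩, hq⟩, hmax⟩ := hMc.exists_isMaxOn hne hcont.continuousOn
      refine ⟨inner ℝ a p, lt_of_le_of_ne (hle a ha p hp) ?_, ?_⟩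
      · intro he
        have := hf a (subset_convexHull ℝ _ ⟨ha, p, hp, he⟩)
        rw [hfv] at this
        have hq' : (inner ℝ v a : ℝ) ≤ u := hq
        linarith
      · intro a' ha' p' hp' h
        exact hmax (show (a', p') ∈ _ from ⟨⟨ha', hp'⟩, h⟩)
    · refine ⟨R - 1, by linarith, ?_⟩
      intro a ha p hp h
      exact absurd ⟨(a, p), ⟨⟨ha, hp⟩, h⟩⟩ hne
  obtain ⟨B, hB⟩ : ∃ B : ℝ, ∀ a ∈ P, ‖(inner ℝ v a : ℝ)‖ ≤ B :=
    hP.exists_bound_of_continuousOn (f := fun a => (inner ℝ v a : ℝ)) (by fun_prop)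
  set ε := (R - m) / (2 * (|B| + 1)) with hε
  have hBp : 0 < 2 * (|B| + 1) := by positivity
  have hεp : 0 < ε := div_pos (by linarith) hBp
  have hεB : ε * (|B| + 1) = (R - m) / 2 := by rw [hε]; field_simp
  have := hmin (ε • v) (max ((m + R) / 2) (R - ε * u)) (by
    intro a ha p hp
    have e1 : (inner ℝ a (p - ε • v) : ℝ) = inner ℝ a p - ε * inner ℝ v a := by
      rw [inner_sub_right, real_inner_smul_right, real_inner_comm a v]
    rw [e1]
    rcases le_or_gt (inner ℝ v a : ℝ) u with h | h
    · apply le_max_of_le_left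
      have h1 := hm a ha p hp h
      have h2 := hB a ha
      rw [Real.norm_eq_abs] at h2
      have h3 := (abs_le.1 h2).1
      have h4 : -(|B| + 1) ≤ (inner ℝ v a : ℝ) := by linarith [le_abs_self B]
      have := mul_le_mul_of_nonneg_left h4 hεp.le
      linarith
    · apply le_max_of_le_right
      have := mul_le_mul_of_nonneg_left h.le hεp.le
      linarith [hle a ha p hp])
  rcases le_max_iff.1 this with h | h
  · linarith
  · have := mul_pos hεp hu
    linarith

lemma zero_ball (C : Set E2) (hC : IsConvexBody C) (hsym : ∀ x ∈ C, -x ∈ C) :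
    ∃ δ > 0, ∀ x : E2, ‖x‖ ≤ δ → x ∈ C := by
  obtain ⟨hconv, hcomp, x, hx⟩ := hC
  obtain ⟨ε, hε, hb⟩ := Metric.isOpen_iff.1 isOpen_interior x hx
  refine ⟨ε / 2, by positivity, fun y hy => ?_⟩
  have h1 : x + y ∈ C := interior_subset (hb (by simp [Metric.mem_ball]; linarith))
  have h2 : x - y ∈ C := interior_subset (hb (by simp [Metric.mem_ball, dist_eq_norm]; linarith))
  have := hconv h1 (hsym _ h2) (by norm_num : (0:ℝ) ≤ 1/2) (by norm_num : (0:ℝ) ≤ 1/2) (by norm_num)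
  convert! this using 1
  module

lemma polar_compact (C : Set E2) (hC : IsConvexBody C) (hsym : ∀ x ∈ C, -x ∈ C) :
    IsCompact (polarBody C) := by
  obtain ⟨δ, hδ, hb⟩ := zero_ball C hC hsym
  rw [Metric.isCompact_iff_isClosed_bounded]
  constructor
  · have : polarBody C = ⋂ x ∈ C, {y : E2 | (inner ℝ x y : ℝ) ≤ 1} := by
      ext y; simp [polarBody]
    rw [this]
    exact isClosed_biInter fun x _ => isClosed_le (by fun_prop) continuous_const
  · rw [isBounded_iff_forall_norm_le]
    refine ⟨1 / δ, fun a ha => ?_⟩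
    by_cases h0 : a = 0
    · subst h0; simp; exact hδ.le
    have hn : 0 < ‖a‖ := norm_pos_iff.2 h0
    have h1 := ha ((δ / ‖a‖) • a) (hb _ (by
      rw [norm_smul, Real.norm_of_nonneg (by positivity)]
      apply le_of_eq; field_simp))
    rw [real_inner_smul_left, real_inner_self_eq_norm_sq] at h1
    rw [le_div_iff₀ hδ]
    have : δ / ‖a‖ * ‖a‖ ^ 2 = ‖a‖ * δ := by field_simp
    linarith

lemma bipolar (C : Set E2) (hC : IsConvexBody C) (hsym : ∀ x ∈ C, -x ∈ C) (ρ : ℝ) (hρ : 0 < ρ)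
    (y : E2) (h : ∀ a ∈ polarBody C, (inner ℝ a y : ℝ) ≤ ρ) : ∃ c ∈ C, y = ρ • c := by
  obtain ⟨δ, hδ, hb⟩ := zero_ball C hC hsym
  refine ⟨ρ⁻¹ • y, ?_, by rw [smul_smul, mul_inv_cancel₀ hρ.ne', one_smul]⟩
  by_contra hn
  obtain ⟨f, u, hf, hu⟩ := geometric_hahn_banach_closed_point hC.1 hC.2.1.isClosed hn
  have hu0 : 0 < u := by
    have := hf 0 (hb 0 (by simpa using hδ.le))
    simpa using this
  set v := (InnerProductSpace.toDual ℝ E2).symm f with hv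
  have hfv : ∀ a, f a = inner ℝ v a := fun a => (InnerProductSpace.toDual_symm_apply).symm
  have h1 := h (u⁻¹ • v) (by
    intro c hc
    have := hf c hc
    rw [hfv] at this
    rw [real_inner_smul_right, real_inner_comm, inv_mul_le_iff₀ hu0]
    linarith)
  rw [hfv, real_inner_smul_right] at hu
  rw [real_inner_smul_left, inv_mul_le_iff₀ hu0] at h1
  rw [lt_inv_mul_iff₀ hρ] at hu
  linarith

lemma circum_le (K C : Set E2) (hKne : K.Nonempty) (hC : IsConvexBody C) (hsym : ∀ x ∈ C, -x ∈ C) (v : E2) (ρ : ℝ)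
    (h : ∀ a ∈ polarBody C, ∀ p ∈ K, (inner ℝ a (p - v) : ℝ) ≤ ρ) : circum K C ≤ ρ := by
  obtain ⟨p0, hp0⟩ := hKne
  have hρ : 0 ≤ ρ := by
    have := h 0 (by intro x _; simp) p0 hp0
    simpa using this
  apply le_of_forall_pos_le_add
  intro ε hε
  apply csInf_le ⟨0, fun x hx => hx.1.le⟩
  refine ⟨by linarith, v, fun p hp => ?_⟩
  obtain ⟨c, hc, he⟩ := bipolar C hC hsym (ρ + ε) (by linarith) (p - v)
    (fun a ha => (h a ha p hp).trans (by linarith))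
  exact Set.mem_add.2 ⟨(ρ + ε) • c, Set.smul_mem_smul_set hc, v, rfl, by rw [← he]; abel⟩

lemma circum_att (K C : Set E2) (hK : IsCompact K) (hKne : K.Nonempty) (hC : IsConvexBody C)
    (hsym : ∀ x ∈ C, -x ∈ C) :
    ∃ t, ∀ a ∈ polarBody C, ∀ p ∈ K, (inner ℝ a (p - t) : ℝ) ≤ circum K C := by
  obtain ⟨p0, hp0⟩ := id hKne
  have hPc := polar_compact C hC hsym
  obtain ⟨M, hM⟩ := isBounded_iff_forall_norm_le.1 hK.isBounded
  obtain ⟨MC, hMC⟩ := isBounded_iff_forall_norm_le.1 hC.2.1.isBounded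
  obtain ⟨MP, hMP⟩ := isBounded_iff_forall_norm_le.1 hPc.isBounded
  have hM0 : 0 ≤ M := (norm_nonneg _).trans (hM p0 hp0)
  have h0P : (0 : E2) ∈ polarBody C := by intro x _; simp
  have hMP0 : 0 ≤ MP := (norm_nonneg _).trans (hMP 0 h0P)
  set ρ0 := MP * M with hρ0
  have hρ00 : 0 ≤ ρ0 := by positivity
  have hpol : ∀ a ∈ polarBody C, ∀ c ∈ C, (inner ℝ a c : ℝ) ≤ 1 := by
    intro a ha c hc; rw [real_inner_comm]; exact ha c hc
  set G : Set (ℝ × E2) := {q | q.1 ∈ Set.Icc 0 ρ0 ∧ ∀ a ∈ polarBody C, ∀ p ∈ K, (inner ℝ a (p - q.2) : ℝ) ≤ q.1} with hG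
  have hGc : IsCompact G := by
    apply IsCompact.of_isClosed_subset (isCompact_Icc.prod (isCompact_closedBall p0 ((ρ0 + 1) * MC)))
      (s := Set.Icc (0:ℝ) ρ0 ×ˢ Metric.closedBall p0 ((ρ0 + 1) * MC))
    · have : G = (Prod.fst ⁻¹' Set.Icc 0 ρ0) ∩ ⋂ a ∈ polarBody C, ⋂ p ∈ K, {q : ℝ × E2 | (inner ℝ a (p - q.2) : ℝ) ≤ q.1} := by
        ext q; simp [hG]
      rw [this]
      exact (isClosed_Icc.preimage continuous_fst).inter (isClosed_biInter fun a _ => isClosed_biInter fun p _ =>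
        isClosed_le (by fun_prop) (by fun_prop))
    · rintro ⟨ρ, t⟩ ⟨h1, h2⟩
      refine ⟨h1, ?_⟩
      obtain ⟨c, hc, he⟩ := bipolar C hC hsym (ρ0 + 1) (by linarith) (p0 - t)
        (fun a ha => (h2 a ha p0 hp0).trans (by linarith [h1.2]))
      rw [Metric.mem_closedBall, dist_comm, dist_eq_norm]
      show ‖p0 - t‖ ≤ _
      rw [he, norm_smul, Real.norm_of_nonneg (by linarith)]
      exact mul_le_mul_of_nonneg_left (hMC c hc) (by linarith)
  have hGne : G.Nonempty := by
    refine ⟨(ρ0, 0), ⟨hρ00, le_rfl⟩, fun a ha p hp => ?_⟩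
    simp only [sub_zero]
    exact (real_inner_le_norm a p).trans (mul_le_mul (hMP a ha) (hM p hp) (norm_nonneg _) hMP0)
  obtain ⟨⟨ρ, t⟩, ⟨hρ, ht⟩, hmin⟩ := hGc.exists_isMinOn hGne continuous_fst.continuousOn
  refine ⟨t, fun a ha p hp => (ht a ha p hp).trans ?_⟩
  show ρ ≤ circum K C
  apply le_csInf
  · refine ⟨ρ + 1, by linarith [hρ.1], t, fun p hp => ?_⟩
    obtain ⟨c, hc, he⟩ := bipolar C hC hsym (ρ + 1) (by linarith [hρ.1]) (p - t)
      (fun a ha => (ht a ha p hp).trans (by simp))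
    exact Set.mem_add.2 ⟨(ρ + 1) • c, Set.smul_mem_smul_set hc, t, rfl, by rw [← he]; abel⟩
  · rintro ρ' ⟨hρ', t', hsub⟩
    by_cases hle : ρ' ≤ ρ0
    · refine hmin (show ((ρ', t') : ℝ × E2) ∈ G from ⟨⟨hρ'.le, hle⟩, ?_⟩)
      intro a ha p hp
      obtain ⟨y, ⟨c, hc, rfl⟩, z, hz, he⟩ := Set.mem_add.1 (hsub hp)
      rw [Set.mem_singleton_iff] at hz
      subst hz
      rw [← he]
      simp only [add_sub_cancel_right, real_inner_smul_right]
      have := mul_le_mul_of_nonneg_left (hpol a ha c hc) hρ'.le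
      linarith
    · exact hρ.2.trans (not_le.1 hle).le

lemma inrad_bdd (K C : Set E2) (hK : IsCompact K) (c1 c2 : E2) (h1 : c1 ∈ C) (h2 : c2 ∈ C) (hne : c1 ≠ c2) :
    BddAbove {ρ : ℝ | 0 < ρ ∧ ∃ t : E2, ρ • C + {t} ⊆ K} := by
  obtain ⟨M, hM⟩ := isBounded_iff_forall_norm_le.1 hK.isBounded
  refine ⟨2 * M / ‖c1 - c2‖, ?_⟩
  rintro ρ ⟨hρ, t, hsub⟩
  have hn : 0 < ‖c1 - c2‖ := norm_pos_iff.2 (sub_ne_zero.2 hne)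
  rw [le_div_iff₀ hn]
  have k1 := hM _ (hsub (Set.add_mem_add (Set.smul_mem_smul_set h1) rfl))
  have k2 := hM _ (hsub (Set.add_mem_add (Set.smul_mem_smul_set h2) rfl))
  have : ρ * ‖c1 - c2‖ = ‖(ρ • c1 + t) - (ρ • c2 + t)‖ := by
    rw [← Real.norm_of_nonneg hρ.le, ← norm_smul]
    rw [Real.norm_of_nonneg hρ.le]
    congr 1
    module
  rw [this]
  exact (norm_sub_le _ _).trans (by linarith)

lemma exists_ne_zero_mem (C : Set E2) (δ : ℝ) (hδ : 0 < δ) (hb : ∀ x : E2, ‖x‖ ≤ δ → x ∈ C) :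
    ∃ c ∈ C, c ≠ 0 := by
  obtain ⟨x, hx⟩ := exists_norm_eq E2 hδ.le
  exact ⟨x, hb x hx.le, by rintro rfl; simp at hx; linarith⟩

lemma inrad_att (K C : Set E2) (hK : IsConvexBody K) (hC : IsConvexBody C)
    (hsym : ∀ x ∈ C, -x ∈ C) :
    0 < inrad K C ∧ ∃ t, ∀ c ∈ C, inrad K C • c + t ∈ K := by
  obtain ⟨δ, hδ, hb⟩ := zero_ball C hC hsym
  obtain ⟨c0, hc0, hc0'⟩ := exists_ne_zero_mem C δ hδ hb
  have h0C : (0 : E2) ∈ C := hb 0 (by simpa using hδ.le)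
  obtain ⟨B, hB⟩ := inrad_bdd K C hK.2.1 c0 0 hc0 h0C hc0'
  have hmem : ∀ ρ t, 0 < ρ → (∀ c ∈ C, ρ • c + t ∈ K) → ρ ∈ {ρ : ℝ | 0 < ρ ∧ ∃ t : E2, ρ • C + {t} ⊆ K} := by
    intro ρ t hρ h
    refine ⟨hρ, t, ?_⟩
    rintro _ ⟨_, ⟨c, hc, rfl⟩, _, rfl, rfl⟩
    exact h c hc
  obtain ⟨MC, hMC⟩ := isBounded_iff_forall_norm_le.1 hC.2.1.isBounded
  obtain ⟨x, hx⟩ := hK.2.2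
  obtain ⟨ε, hε, hbx⟩ := Metric.isOpen_iff.1 isOpen_interior x hx
  have hMC0 : 0 ≤ MC := (norm_nonneg _).trans (hMC 0 h0C)
  set ρ1 := ε / (MC + 1) with hρ1
  have hρ1p : 0 < ρ1 := by positivity
  have hρ1m : ∀ c ∈ C, ρ1 • c + x ∈ K := by
    intro c hc
    apply interior_subset
    apply hbx
    rw [Metric.mem_ball, dist_eq_norm, add_sub_cancel_right, norm_smul, Real.norm_of_nonneg hρ1p.le]
    have e1 : ρ1 * (MC + 1) = ε := by rw [hρ1]; field_simp
    have := mul_le_mul_of_nonneg_left (hMC c hc) hρ1p.le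
    linarith
  set G : Set (ℝ × E2) := {q | q.1 ∈ Set.Icc ρ1 B ∧ ∀ c ∈ C, q.1 • c + q.2 ∈ K} with hG
  have hGc : IsCompact G := by
    apply IsCompact.of_isClosed_subset (isCompact_Icc.prod hK.2.1) (s := Set.Icc ρ1 B ×ˢ K)
    · have : G = (Prod.fst ⁻¹' Set.Icc ρ1 B) ∩ ⋂ c ∈ C, (fun q : ℝ × E2 => q.1 • c + q.2) ⁻¹' K := by
        ext q; simp [hG]
      rw [this]
      exact (isClosed_Icc.preimage continuous_fst).inter (isClosed_biInter fun c _ =>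
        hK.2.1.isClosed.preimage (by fun_prop))
    · rintro ⟨ρ, t⟩ ⟨h1, h2⟩
      exact ⟨h1, by simpa using h2 0 h0C⟩
  have hGne : G.Nonempty := ⟨(ρ1, x), ⟨le_rfl, hB (hmem ρ1 x hρ1p hρ1m)⟩, hρ1m⟩
  obtain ⟨⟨ρ, t⟩, ⟨hρ, ht⟩, hmax⟩ := hGc.exists_isMaxOn hGne continuous_fst.continuousOn
  have heq : inrad K C = ρ := by
    apply IsGreatest.csSup_eq
    refine ⟨hmem ρ t (hρ1p.trans_le hρ.1) ht, ?_⟩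
    rintro ρ' ⟨hρ', t', hsub⟩
    by_cases hle : ρ1 ≤ ρ'
    · refine hmax (show ((ρ', t') : ℝ × E2) ∈ G from ⟨⟨hle, hB ⟨hρ', t', hsub⟩⟩, ?_⟩)
      intro c hc
      exact hsub (Set.add_mem_add (Set.smul_mem_smul_set hc) rfl)
    · exact (not_le.1 hle).le.trans hρ.1
  rw [heq]
  exact ⟨hρ1p.trans_le hρ.1, t, ht⟩

lemma diam_le (K C : Set E2) (hK : IsConvexBody K) (hC : IsConvexBody C)
    (hsym : ∀ x ∈ C, -x ∈ C) (a : E2) (ha : a ∈ polarBody C) (x y : E2) (hx : x ∈ K) (hy : y ∈ K) :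
    (inner ℝ a (x - y) : ℝ) ≤ diamB K C := by
  obtain ⟨δ, hδ, hb⟩ := zero_ball C hC hsym
  have h0C : (0 : E2) ∈ C := hb 0 (by simpa using hδ.le)
  have hpol : ∀ c ∈ C, (inner ℝ a c : ℝ) ≤ 1 := by
    intro c hc; rw [real_inner_comm]; exact ha c hc
  have hpol' : ∀ c ∈ C, -1 ≤ (inner ℝ a c : ℝ) := by
    intro c hc
    have := hpol _ (hsym c hc)
    rw [inner_neg_right] at this
    linarith
  suffices h : (inner ℝ a (x - y) : ℝ) / 2 ≤ circum (K - K) (C - C) by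
    unfold diamB; linarith
  apply le_csInf
  · obtain ⟨M, hM⟩ := isBounded_iff_forall_norm_le.1 hK.2.1.isBounded
    have hM0 : 0 ≤ M := (norm_nonneg _).trans (hM x hx)
    have hp : 0 < (2 * M + 1) / δ := by positivity
    refine ⟨(2 * M + 1) / δ, hp, 0, ?_⟩
    rintro _ ⟨u, hu, v, hv, rfl⟩
    refine Set.mem_add.2 ⟨u - v, ?_, 0, rfl, by simp⟩
    refine ⟨((2 * M + 1) / δ)⁻¹ • (u - v), ?_, ?_⟩
    · refine ⟨_, hb (((2 * M + 1) / δ)⁻¹ • (u - v)) ?_, 0, h0C, by simp⟩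
      rw [norm_smul, Real.norm_of_nonneg (by positivity), inv_mul_le_iff₀ hp]
      have e : (2 * M + 1) / δ * δ = 2 * M + 1 := by field_simp
      rw [e]
      exact (norm_sub_le _ _).trans (by linarith [hM u hu, hM v hv])
    · simp only [smul_smul]
      rw [mul_inv_cancel₀ hp.ne', one_smul]
  · rintro ρ ⟨hρ, t, hsub⟩
    obtain ⟨_, ⟨_, ⟨c1, hc1, c2, hc2, rfl⟩, rfl⟩, z, hz, he⟩ := Set.mem_add.1 (hsub (Set.sub_mem_sub hx hy))
    obtain ⟨_, ⟨_, ⟨c3, hc3, c4, hc4, rfl⟩, rfl⟩, z', hz', he'⟩ := Set.mem_add.1 (hsub (Set.sub_mem_sub hy hx))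
    rw [Set.mem_singleton_iff] at hz hz'
    subst hz
    subst hz'
    have k1 := congrArg (fun v => (inner ℝ a v : ℝ)) he
    have k2 := congrArg (fun v => (inner ℝ a v : ℝ)) he'
    simp only [inner_add_right, inner_sub_right, real_inner_smul_right] at k1 k2 ⊢
    have b1 := mul_le_mul_of_nonneg_left (hpol c1 hc1) hρ.le
    have b2 := mul_le_mul_of_nonneg_left (hpol' c2 hc2) hρ.le
    have b3 := mul_le_mul_of_nonneg_left (hpol' c3 hc3) hρ.le
    have b4 := mul_le_mul_of_nonneg_left (hpol c4 hc4) hρ.le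
    linarith

theorem stmt1 (K C : Set E2) (hK : IsConvexBody K) (hC : IsConvexBody C)
    (hCsym : C = -C) (hpc : inrad K C + circum K C = diamB K C) :
    diamB K C / widthB K C ≤ (phiR + 1) / 2 := by
  have h5 : Real.sqrt 5 ^ 2 = 5 := Real.sq_sqrt (by norm_num)
  have h5' : 1 < Real.sqrt 5 := by
    rw [Real.lt_sqrt (by norm_num)]; norm_num
  have hφ : phiR ^ 2 = phiR + 1 := by unfold phiR; nlinarith
  have hφ1 : 1 < phiR := by unfold phiR; linarith
  have hφ2 : 0 < 2 - phiR := by nlinarith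
  have hsym : ∀ x ∈ C, -x ∈ C := by
    intro x hx
    rw [hCsym] at hx
    exact hx
  have hKne : K.Nonempty := hK.2.2.mono interior_subset
  have hKK : IsCompact (K - K) := by
    rw [sub_eq_add_neg]; exact hK.2.1.add hK.2.1.neg
  obtain ⟨hr, tin, htin⟩ := inrad_att K C hK hC hsym
  obtain ⟨t0, ht0⟩ := circum_att K C hK.2.1 hKne hC hsym
  have hD := diam_le K C hK hC hsym
  have hcle := circum_le K C hKne hC hsym
  rw [← hpc] at hD
  rw [← hpc]
  set r := inrad K C with hrdef
  set R := circum K C with hRdef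
  have hR0 : 0 ≤ R := by
    obtain ⟨p, hp⟩ := hKne
    have := ht0 0 (by intro x _; simp) p hp
    simpa using this
  set W := 2 * (2 - phiR) * (r + R) with hW
  have hWp : 0 < W := by positivity
  -- the functional inequality
  have hfun : ∀ f : E2, ∀ x ∈ C, ∃ y ∈ K, ∃ z ∈ K, W * inner ℝ f x ≤ inner ℝ f y - inner ℝ f z := by
    intro f x hx
    rcases le_or_gt R (phiR * r) with hcase | hcase
    · have hW2 : W ≤ 2 * r := by
        have e1 : (2 - phiR) * (phiR + 1) = 1 := by nlinarith
        have : (2 - phiR) * (r + R) ≤ (2 - phiR) * ((phiR + 1) * r) :=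
          mul_le_mul_of_nonneg_left (by linarith) hφ2.le
        rw [← mul_assoc, e1] at this
        rw [hW]; linarith
      have key : ∀ x ∈ C, 0 ≤ (inner ℝ f x : ℝ) → ∃ y ∈ K, ∃ z ∈ K, W * inner ℝ f x ≤ inner ℝ f y - inner ℝ f z := by
        intro x hx h
        refine ⟨_, htin x hx, _, htin _ (hsym x hx), ?_⟩
        simp only [inner_add_right, real_inner_smul_right, inner_neg_right]
        nlinarith
      rcases le_or_gt 0 (inner ℝ f x : ℝ) with h | h
      · exact key x hx h
      · obtain ⟨p, hp⟩ := hKne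
        refine ⟨p, hp, p, hp, ?_⟩
        rw [sub_self]
        exact mul_nonpos_of_nonneg_of_nonpos hWp.le h.le
    · have hRp : 0 < R := by nlinarith
      have hKc : IsCompact ((fun y => y - t0) '' K) := hK.2.1.image (by fun_prop)
      have h0 := touch ((fun y => y - t0) '' K) (polarBody C) hKc (polar_compact C hC hsym) R
        (by
          rintro a ha _ ⟨p, hp, rfl⟩
          exact ht0 a ha p hp)
        (by
          intro v R' h
          apply hcle (t0 + v) R'
          intro a ha p hp
          have := h a ha _ ⟨p, hp, rfl⟩
          rwa [sub_sub] at this)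
      obtain ⟨y, ⟨y', hy', rfl⟩, z, ⟨z', hz', rfl⟩, h⟩ := core_geom ((fun y => y - t0) '' K) C phiR r R
        hφ hφ1 hr hcase.le hsym
        (by
          rintro a ha _ ⟨p, hp, rfl⟩ _ ⟨q, hq, rfl⟩
          have := hD a ha p q hp hq
          simpa using this)
        ⟨tin - t0, fun c hc => ⟨_, htin c hc, by simp only; abel⟩⟩
        (by
          rintro _ ⟨p, hp, rfl⟩
          exact bipolar C hC hsym R hRp (p - t0) (fun a ha => ht0 a ha p hp))
        h0 f x hx
      refine ⟨y', hy', z', hz', ?_⟩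
      simp only [inner_sub_right] at h
      linarith
  have hsub : ∀ x ∈ C, W • x ∈ K - K := by
    intro x hx
    by_contra hn
    obtain ⟨f, u, hf, hu⟩ := geometric_hahn_banach_closed_point (hK.1.sub hK.1)
      hKK.isClosed hn
    have hfv : ∀ a, f a = inner ℝ ((InnerProductSpace.toDual ℝ E2).symm f) a :=
      fun a => (InnerProductSpace.toDual_symm_apply).symm
    obtain ⟨y, hy, z, hz, h⟩ := hfun ((InnerProductSpace.toDual ℝ E2).symm f) x hx
    rw [← hfv, ← hfv, ← hfv] at h
    have h2 := hf (y - z) (Set.sub_mem_sub hy hz)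
    rw [map_sub] at h2
    rw [map_smul, smul_eq_mul] at hu
    linarith
  have hw : W ≤ widthB K C := by
    suffices h : W / 2 ≤ inrad (K - K) (C - C) by
      unfold widthB; linarith
    obtain ⟨δ, hδ, hb⟩ := zero_ball C hC hsym
    obtain ⟨c0, hc0, hc0'⟩ := exists_ne_zero_mem C δ hδ hb
    have h0C : (0 : E2) ∈ C := hb 0 (by simpa using hδ.le)
    apply le_csSup (inrad_bdd (K - K) (C - C) hKK c0 0
      ⟨c0, hc0, 0, h0C, by simp⟩ ⟨0, h0C, 0, h0C, by simp⟩ hc0')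
    refine ⟨by linarith, 0, ?_⟩
    rintro _ ⟨_, ⟨_, ⟨c1, hc1, c2, hc2, rfl⟩, rfl⟩, _, rfl, rfl⟩
    have hm := hC.1 hc1 (hsym _ hc2) (by norm_num : (0:ℝ) ≤ 1/2) (by norm_num : (0:ℝ) ≤ 1/2) (by norm_num)
    have := hsub _ hm
    convert! this using 1
    module
  rw [div_le_iff₀ (hWp.trans_le hw)]
  have e1 : (2 - phiR) * (phiR + 1) = 1 := by nlinarith
  have e2 : (phiR + 1) / 2 * W = r + R := by
    calc (phiR + 1) / 2 * W = ((2 - phiR) * (phiR + 1)) * (r + R) := by rw [hW]; ring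
      _ = r + R := by rw [e1, one_mul]
  have := mul_le_mul_of_nonneg_left hw (by linarith : 0 ≤ (phiR + 1) / 2)
  linarith
end
end

section
/- For every pair (ρ, s) with 1 ≤ s ≤ 2 and 1 ≤ ρ ≤ ((s+1)/2)·c(s), there exist a Minkowski centered convex body K ⊆ ℝ² with s(K) = s and a 0-symmetric convex body C ⊆ ℝ² such that K is pseudo-complete with respect to C and D(K,C)/w(K,C) = ρ. -/
open scoped Pointwise RealInnerProductSpace
open Set

noncomputable section

theorem sub_singleton_mem {K : Set E2} {c z : E2} : z ∈ K - {c} ↔ ∃ x ∈ K, x - c = z := by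
  simp

theorem wsum_le {l1 l2 l3 a b a1 a2 a3 : ℝ} (h1 : 0 < l1) (h2 : 0 < l2) (h3 : 0 < l3)
    (hl : l1 + l2 + l3 = 1) (hs : l1 * a1 + l2 * a2 + l3 * a3 = 0)
    (e1 : a ≤ b + a1) (e2 : a ≤ b + a2) (e3 : a ≤ b + a3) : a ≤ b := by
  have := mul_le_mul_of_nonneg_left e1 h1.le
  have := mul_le_mul_of_nonneg_left e2 h2.le
  have := mul_le_mul_of_nonneg_left e3 h3.le
  have h : (l1 + l2 + l3) * a ≤ (l1 + l2 + l3) * b := by linarith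
  rwa [hl, one_mul, one_mul] at h

theorem core (K : Set E2) (hconv : Convex ℝ K) (hcomp : IsCompact K)
    (hint : (interior K).Nonempty) (h0 : (0 : E2) ∈ K) (s : ℝ) (hs1 : 1 ≤ s)
    (hneg : ∀ x ∈ K, (-(1 / s)) • x ∈ K)
    (A1 A2 A3 f : E2 →ₗ[ℝ] ℝ) (l1 l2 l3 : ℝ) (hl1 : 0 < l1) (hl2 : 0 < l2) (hl3 : 0 < l3)
    (hl : l1 + l2 + l3 = 1) (hA : ∀ x, l1 * A1 x + l2 * A2 x + l3 * A3 x = 0)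
    (hA1 : ∀ x ∈ K, A1 x ≤ 1) (hA2 : ∀ x ∈ K, A2 x ≤ 1) (hA3 : ∀ x ∈ K, A3 x ≤ 1)
    (q1 q2 q3 : E2) (hq1 : q1 ∈ K) (hq2 : q2 ∈ K) (hq3 : q3 ∈ K)
    (hv1 : A1 q1 = -s) (hv2 : A2 q2 = -s) (hv3 : A3 q3 = -s)
    (p : E2) (hp : p ∈ K) (hp' : -p ∈ K) (hfp : f p = 1) (B : ℝ)
    (hB : ∀ x ∈ K, ∀ y ∈ K, f x - f y ≤ B) (ρ : ℝ) (hρ1 : 1 ≤ ρ) (hρ2 : ρ * B ≤ s + 1) :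
    ∃ C : Set E2, IsConvexBody K ∧ MinkCentered K ∧ minkAsym K = s ∧
      IsConvexBody C ∧ C = -C ∧ inrad K C + circum K C = diamB K C ∧
      diamB K C / widthB K C = ρ := by
  have hs0 : 0 < s := by linarith
  have hs10 : 0 < s + 1 := by linarith
  have hρ0 : 0 < ρ := by linarith
  -- asymmetry
  have hasym : minkAsym K = s := by
    apply IsLeast.csInf_eq
    refine ⟨⟨hs0, 0, ?_⟩, ?_⟩
    · rintro z hz
      obtain ⟨x, hx, rfl⟩ := sub_singleton_mem.1 hz
      refine ⟨(1/s) • x, ?_, ?_⟩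
      · refine Set.mem_sub.2 ⟨0, rfl, _, hneg x hx, ?_⟩
        simp
      · simp [smul_smul, hs0.ne']
    · rintro r ⟨hr, c, hc⟩
      have key : ∀ A : E2 →ₗ[ℝ] ℝ, (∀ x ∈ K, A x ≤ 1) → ∀ q ∈ K, A q = -s →
          s ≤ r + (-(1 + r)) * A c := by
        intro A hA q hq hv
        obtain ⟨w, hw, hwe⟩ := hc (sub_singleton_mem.2 ⟨q, hq, rfl⟩)
        obtain ⟨c', hc', y, hy, rfl⟩ := Set.mem_sub.1 hw
        rw [Set.mem_singleton_iff] at hc'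
        subst hc'
        have := congrArg A hwe
        simp only [map_sub, map_smul, smul_eq_mul, hv] at this
        have := mul_le_mul_of_nonneg_left (hA y hy) hr.le
        nlinarith
      refine wsum_le hl1 hl2 hl3 hl ?_ (key A1 hA1 q1 hq1 hv1) (key A2 hA2 q2 hq2 hv2)
        (key A3 hA3 q3 hq3 hv3)
      linear_combination (-(1 + r)) * hA c
  have hcent : MinkCentered K := by
    rw [MinkCentered, hasym]
    intro x hx
    refine ⟨(1/s) • x, ?_, ?_⟩
    · rw [Set.mem_neg]; simpa using hneg x hx
    · simp [smul_smul, hs0.ne']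
  set M : Set E2 := K - K with hM
  have hMconv : Convex ℝ M := hconv.sub hconv
  have hMcomp : IsCompact M := by
    rw [hM, sub_eq_add_neg]; exact hcomp.add hcomp.neg
  have hM0 : (0 : E2) ∈ M := ⟨0, h0, 0, h0, by simp⟩
  have hMneg : ∀ x ∈ M, -x ∈ M := by
    rintro _ ⟨x, hx, y, hy, rfl⟩
    exact ⟨y, hy, x, hx, by simp⟩
  have hscale : ∀ {S : Set E2}, Convex ℝ S → (0:E2) ∈ S → ∀ x ∈ S, ∀ t : ℝ, 0 ≤ t → t ≤ 1 →
      t • x ∈ S := by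
    intro S hS hS0 x hx t ht ht1
    exact hS.smul_mem_of_zero_mem hS0 hx ⟨ht, ht1⟩
  -- A bounds below
  have hlow : ∀ A : E2 →ₗ[ℝ] ℝ, (∀ x ∈ K, A x ≤ 1) → ∀ x ∈ K, -s ≤ A x := by
    intro A hA x hx
    have := hA _ (hneg x hx)
    simp only [map_smul, smul_eq_mul] at this
    have h2 : s * (-(1 / s) * A x) = - A x := by field_simp
    nlinarith
  -- the body C
  let C : Set E2 := {x | x ∈ K ∧ -x ∈ K ∧ ((s + 1) / ρ) • x ∈ M}
  have hCdef : ∀ x, x ∈ C ↔ x ∈ K ∧ -x ∈ K ∧ ((s + 1) / ρ) • x ∈ M := fun x => Iff.rfl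
  have hCneg : ∀ x ∈ C, -x ∈ C := by
    rintro x ⟨h1, h2, h3⟩
    exact ⟨h2, by simpa using h1, by simpa using hMneg _ h3⟩
  have hCsymm : C = -C := by
    ext x
    rw [Set.mem_neg]
    exact ⟨hCneg x, fun h => by simpa using hCneg _ h⟩
  have hMC : ∀ x ∈ M, (1 / (s + 1)) • x ∈ C := by
    have aux : ∀ x ∈ K, ∀ y ∈ K, (1 / (s + 1)) • (x - y) ∈ K := by
      intro x hx y hy
      have := hconv hx (hneg y hy) (a := 1 / (s+1)) (b := s / (s+1)) (by positivity)
        (by positivity) (by field_simp; ring)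
      convert this using 1
      rw [smul_smul, smul_sub, sub_eq_add_neg, ← neg_smul]
      congr 2
      field_simp
    rintro _ ⟨x, hx, y, hy, rfl⟩
    refine ⟨aux x hx y hy, ?_, ?_⟩
    · have := aux y hy x hx
      rwa [← smul_neg, neg_sub]
    · rw [smul_smul]
      have e : (s + 1) / ρ * (1 / (s + 1)) = 1 / ρ := by field_simp
      simp only [e]
      exact hscale hMconv hM0 _ ⟨x, hx, y, hy, rfl⟩ _ (by positivity)
        (by rw [div_le_one hρ0]; exact hρ1)
  have hCconv : Convex ℝ C := by
    intro x hx y hy a b ha hb hab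
    refine ⟨hconv hx.1 hy.1 ha hb hab, ?_, ?_⟩
    · have := hconv hx.2.1 hy.2.1 ha hb hab
      convert this using 1
      simp only [smul_neg]; abel
    · have := hMconv hx.2.2 hy.2.2 ha hb hab
      convert this using 1
      rw [smul_add, smul_comm _ a, smul_comm _ b]
  have hCcomp : IsCompact C := by
    apply hcomp.of_isClosed_subset
    · have : C = K ∩ ((fun x => -x) ⁻¹' K ∩ (fun x => ((s + 1) / ρ) • x) ⁻¹' M) := rfl
      rw [this]
      exact hcomp.isClosed.inter ((hcomp.isClosed.preimage (by fun_prop)).inter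
        (hMcomp.isClosed.preimage (by fun_prop)))
    · exact fun x hx => hx.1
  have hKM : ∀ x ∈ K, x ∈ M := fun x hx => ⟨x, hx, 0, h0, by simp⟩
  have hCint : (interior C).Nonempty := by
    have hsub : (1 / (s + 1)) • K ⊆ C := by
      rintro _ ⟨x, hx, rfl⟩
      exact hMC x (hKM x hx)
    have hne : (1 / (s + 1)) ≠ 0 := by positivity
    refine Set.Nonempty.mono (interior_mono hsub) ?_
    rw [interior_smul₀ hne]
    exact hint.smul_set
  have hCC : ∀ x ∈ C - C, (1/2 : ℝ) • x ∈ C := by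
    rintro _ ⟨x, hx, y, hy, rfl⟩
    have := hCconv hx (hCneg y hy) (a := 1/2) (b := 1/2) (by norm_num) (by norm_num) (by norm_num)
    convert this using 1
    simp [sub_eq_add_neg]
  have hCC' : ∀ x ∈ C, (2 : ℝ) • x ∈ C - C := by
    intro x hx
    exact ⟨x, hx, -x, hCneg x hx, by simp [two_smul]⟩
  have hqC : ∀ q ∈ K, (1 / s) • q ∈ C := by
    intro q hq
    have := hMC (q - (-(1 / s)) • q) ⟨q, hq, _, hneg q hq, rfl⟩
    convert this using 1
    match_scalars
    field_simp
    ring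
  have hinrad : inrad K C = 1 := by
    apply IsGreatest.csSup_eq
    refine ⟨⟨one_pos, 0, ?_⟩, ?_⟩
    · intro x hx
      simp at hx
      exact hx.1
    · rintro r ⟨hr, t, ht⟩
      have key : ∀ A : E2 →ₗ[ℝ] ℝ, (∀ x ∈ K, A x ≤ 1) → ∀ q ∈ K, A q = -s →
          r ≤ 1 + (-1) * A t := by
        intro A hA q hq hv
        have h1 : r • (-((1/s) • q)) + t ∈ K :=
          ht (Set.add_mem_add (Set.smul_mem_smul_set (hCneg _ (hqC q hq))) rfl)
        have := hA _ h1
        simp only [map_add, map_smul, map_neg, smul_eq_mul, hv] at this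
        have e : r * -(1 / s * -s) = r := by field_simp
        linarith
      refine wsum_le hl1 hl2 hl3 hl ?_ (key A1 hA1 q1 hq1 hv1) (key A2 hA2 q2 hq2 hv2)
        (key A3 hA3 q3 hq3 hv3)
      linear_combination (-1) * hA t
  have hcirc : circum K C = s := by
    apply IsLeast.csInf_eq
    refine ⟨⟨hs0, 0, ?_⟩, ?_⟩
    · intro x hx
      refine ⟨x, ⟨(1/s) • x, hqC x hx, ?_⟩, 0, rfl, by simp⟩
      simp [smul_smul, hs0.ne']
    · rintro r ⟨hr, t, ht⟩
      have key : ∀ A : E2 →ₗ[ℝ] ℝ, (∀ x ∈ K, A x ≤ 1) → ∀ q ∈ K, A q = -s →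
          s ≤ r + (-1) * A t := by
        intro A hA q hq hv
        obtain ⟨_, ⟨c, hc, rfl⟩, t', ht', he⟩ := ht hq
        rw [Set.mem_singleton_iff] at ht'
        subst ht'
        have h1 := congrArg A he
        have h2 := hA _ hc.2.1
        simp only [map_add, map_smul, map_neg, smul_eq_mul, hv] at h1 h2
        nlinarith
      refine wsum_le hl1 hl2 hl3 hl ?_ (key A1 hA1 q1 hq1 hv1) (key A2 hA2 q2 hq2 hv2)
        (key A3 hA3 q3 hq3 hv3)
      linear_combination (-1) * hA t
  have hdiam : diamB K C = s + 1 := by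
    have : circum M (C - C) = (s + 1) / 2 := by
      apply IsLeast.csInf_eq
      refine ⟨⟨by positivity, 0, ?_⟩, ?_⟩
      · intro x hx
        refine ⟨x, ⟨(2:ℝ) • ((1/(s+1)) • x), hCC' _ (hMC x hx), ?_⟩, 0, rfl, by simp⟩
        simp only [smul_smul]
        have e : (s + 1) / 2 * (2 * (1 / (s + 1))) = 1 := by field_simp
        rw [e, one_smul]
      · rintro r ⟨hr, t, ht⟩
        have hb : ∀ x ∈ C, A1 x ≤ 1 ∧ -1 ≤ A1 x := by
          intro x hx
          have h1 := hA1 _ hx.1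
          have h2 := hA1 _ hx.2.1
          rw [map_neg] at h2
          exact ⟨h1, by linarith⟩
        have hz : (q1 - (-(1 / s)) • q1) ∈ M := ⟨q1, hq1, _, hneg q1 hq1, rfl⟩
        have hzv : A1 (q1 - (-(1 / s)) • q1) = -(s + 1) := by
          simp only [map_sub, map_smul, smul_eq_mul, hv1]
          field_simp
          ring
        obtain ⟨_, ⟨_, ⟨c, hc, d, hd, rfl⟩, rfl⟩, t', ht', he⟩ := ht hz
        rw [Set.mem_singleton_iff] at ht'
        subst ht'
        obtain ⟨_, ⟨_, ⟨c', hc', d', hd', rfl⟩, rfl⟩, t'', ht'', he'⟩ := ht (hMneg _ hz)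
        rw [Set.mem_singleton_iff] at ht''
        subst ht''
        have h1 := congrArg A1 he
        have h2 := congrArg A1 he'
        simp only [map_neg, hzv] at h1 h2
        simp only [map_add, map_smul, map_sub, smul_eq_mul] at h1 h2
        have b1 := hb c hc
        have b2 := hb d hd
        have b3 := hb c' hc'
        have b4 := hb d' hd'
        have : r * ((A1 c' - A1 d') - (A1 c - A1 d)) ≤ r * 4 :=
          mul_le_mul_of_nonneg_left (by linarith) hr.le
        linarith
    rw [diamB, this]; ring
  have hwidth : widthB K C = (s + 1) / ρ := by
    have : inrad M (C - C) = (s + 1) / (2 * ρ) := by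
      -- maximal multiple of p in M
      let S : Set ℝ := {η | η • p ∈ M}
      have hfM : ∀ x ∈ M, f x ≤ B := by
        rintro _ ⟨x, hx, y, hy, rfl⟩
        simpa using hB x hx y hy
      have hSb : BddAbove S := ⟨B, fun η hη => by
        have := hfM _ hη
        simpa [hfp] using this⟩
      have hSc : IsClosed S := hMcomp.isClosed.preimage (by fun_prop)
      have hS2 : (2:ℝ) ∈ S := ⟨p, hp, -p, hp', by simp [two_smul]⟩
      have hmem : sSup S ∈ S := hSc.csSup_mem ⟨2, hS2⟩ hSb
      set η := sSup S with hη
      have hη2 : 2 ≤ η := le_csSup hSb hS2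
      have hηB : η ≤ B := by
        have := hfM _ hmem
        simpa [hfp] using this
      have hθ : (ρ * η / (s + 1)) • p ∈ C := by
        have t0 : 0 ≤ ρ * η / (s + 1) := by positivity
        have t1 : ρ * η / (s + 1) ≤ 1 := by
          rw [div_le_one hs10]
          nlinarith
        refine ⟨hscale hconv h0 p hp _ t0 t1, ?_, ?_⟩
        · rw [← smul_neg]; exact hscale hconv h0 _ hp' _ t0 t1
        · rw [smul_smul]
          have e : (s + 1) / ρ * (ρ * η / (s + 1)) = η := by field_simp
          rw [e]; exact hmem
      apply IsGreatest.csSup_eq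
      refine ⟨⟨by positivity, 0, ?_⟩, ?_⟩
      · rintro _ ⟨_, ⟨x, hx, rfl⟩, t, ht, rfl⟩
        rw [Set.mem_singleton_iff] at ht
        subst ht
        have := (hCC x hx).2.2
        rw [smul_smul] at this
        have e : (s + 1) / ρ * (1/2) = (s + 1) / (2 * ρ) := by field_simp
        rw [e] at this
        simpa using this
      · rintro r ⟨hr, t, ht⟩
        have h1 : r • ((2:ℝ) • ((ρ * η / (s + 1)) • p)) + t ∈ M :=
          ht (Set.add_mem_add (Set.smul_mem_smul_set (hCC' _ hθ)) rfl)
        have h2 : r • ((2:ℝ) • (-((ρ * η / (s + 1)) • p))) + t ∈ M :=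
          ht (Set.add_mem_add (Set.smul_mem_smul_set (hCC' _ (hCneg _ hθ))) rfl)
        have h3 := hMconv h1 (hMneg _ h2) (a := 1/2) (b := 1/2) (by norm_num) (by norm_num)
          (by norm_num)
        have h4 : (r * 2 * (ρ * η / (s + 1))) ∈ S := by
          change _ • p ∈ M
          convert h3 using 1
          module
        have h5 := le_csSup hSb h4
        rw [← hη] at h5
        rw [le_div_iff₀ (by positivity)]
        have h6 : r * 2 * (ρ * η / (s + 1)) = (r * (2 * ρ) / (s + 1)) * η := by ring
        rw [h6] at h5
        have h7 : r * (2 * ρ) / (s + 1) ≤ 1 := by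
          by_contra hcon
          push Not at hcon
          nlinarith
        rwa [div_le_one hs10] at h7
    rw [widthB, this]; field_simp
  refine ⟨C, ⟨hconv, hcomp, hint⟩, hcent, hasym, ⟨hCconv, hCcomp, hCint⟩, hCsymm, ?_, ?_⟩
  · rw [hinrad, hcirc, hdiam]; ring
  · rw [hdiam, hwidth]; field_simp

theorem concrete (ρ s m n c G y1 x2 : ℝ) (hs1 : 1 ≤ s) (hm : 0 < m) (hn : 0 < n)
    (hmn : m + n = s) (hm1 : m ≤ 1) (hn1 : n ≤ 1) (hc0 : 0 ≤ c) (hc1 : c ≤ 1)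
    (hG1 : 1 ≤ G) (hGs : G ≤ s)
    (a1 : -s ≤ y1) (a2 : y1 ≤ 1) (a3 : -s ≤ m * s - n * y1) (a4 : m * s - n * y1 ≤ 1)
    (b1 : -s ≤ x2) (b2 : x2 ≤ 1) (b3 : -s ≤ n * s - m * x2) (b4 : n * s - m * x2 ≤ 1)
    (a5 : -1 ≤ c * s + (1 - c) * y1) (a6 : c * s + (1 - c) * y1 ≤ G)
    (b5 : -1 ≤ -c * x2 - (1 - c) * s) (b6 : -c * x2 - (1 - c) * s ≤ G)
    (hρ1 : 1 ≤ ρ) (hρ2 : ρ * (1 + G) ≤ s + 1) :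
    ∃ K C : Set E2, IsConvexBody K ∧ MinkCentered K ∧ minkAsym K = s ∧
      IsConvexBody C ∧ C = -C ∧ inrad K C + circum K C = diamB K C ∧
      diamB K C / widthB K C = ρ := by
  have hs0 : 0 < s := by linarith
  let A1 : E2 →ₗ[ℝ] ℝ := (EuclideanSpace.proj (0 : Fin 2) : E2 →L[ℝ] ℝ).toLinearMap
  let A2 : E2 →ₗ[ℝ] ℝ := (EuclideanSpace.proj (1 : Fin 2) : E2 →L[ℝ] ℝ).toLinearMap
  let A3 : E2 →ₗ[ℝ] ℝ := -(m • A1 + n • A2)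
  let f : E2 →ₗ[ℝ] ℝ := (-c) • A1 + (1 - c) • A2
  have e1 : ∀ x, A1 x = x 0 := fun x => rfl
  have e2 : ∀ x, A2 x = x 1 := fun x => rfl
  have e3 : ∀ x, A3 x = -(m * A1 x + n * A2 x) := fun x => rfl
  have ef : ∀ x, f x = -c * A1 x + (1 - c) * A2 x := fun x => rfl
  have k1 : Continuous A1 := LinearMap.continuous_of_finiteDimensional A1
  have k2 : Continuous A2 := LinearMap.continuous_of_finiteDimensional A2
  have k3 : Continuous A3 := LinearMap.continuous_of_finiteDimensional A3
  have kf : Continuous f := LinearMap.continuous_of_finiteDimensional f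
  let K : Set E2 := (A1 ⁻¹' Icc (-s) 1 ∩ A2 ⁻¹' Icc (-s) 1) ∩ (A3 ⁻¹' Icc (-s) 1 ∩ f ⁻¹' Icc (-1) G)
  have hK : ∀ x, x ∈ K ↔ ((-s ≤ A1 x ∧ A1 x ≤ 1) ∧ (-s ≤ A2 x ∧ A2 x ≤ 1)) ∧
      ((-s ≤ A3 x ∧ A3 x ≤ 1) ∧ (-1 ≤ f x ∧ f x ≤ G)) := fun x => Iff.rfl
  have p1 : ∀ x y, A1 (pt x y) = x := fun x y => rfl
  have p2 : ∀ x y, A2 (pt x y) = y := fun x y => rfl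
  have hconv : Convex ℝ K :=
    (((convex_Icc _ _).linear_preimage A1).inter ((convex_Icc _ _).linear_preimage A2)).inter
    (((convex_Icc _ _).linear_preimage A3).inter ((convex_Icc _ _).linear_preimage f))
  have hclosed : IsClosed K :=
    ((isClosed_Icc.preimage k1).inter (isClosed_Icc.preimage k2)).inter
    ((isClosed_Icc.preimage k3).inter (isClosed_Icc.preimage kf))
  have hbdd : Bornology.IsBounded K := by
    refine isBounded_iff_forall_norm_le.2 ⟨Real.sqrt (s ^ 2 + s ^ 2), fun x hx => ?_⟩
    rw [hK, e1, e2] at hx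
    obtain ⟨⟨⟨h1, h2⟩, h3, h4⟩, -⟩ := hx
    rw [EuclideanSpace.norm_eq]
    apply Real.sqrt_le_sqrt
    rw [Fin.sum_univ_two, Real.norm_eq_abs, Real.norm_eq_abs, sq_abs, sq_abs]
    nlinarith
  have hcomp : IsCompact K := Metric.isCompact_of_isClosed_isBounded hclosed hbdd
  have hint : (interior K).Nonempty := by
    refine ⟨0, interior_maximal (s := K) (t := (A1 ⁻¹' Ioo (-s) 1 ∩ A2 ⁻¹' Ioo (-s) 1) ∩
      (A3 ⁻¹' Ioo (-s) 1 ∩ f ⁻¹' Ioo (-1) G)) ?_ ?_ ?_⟩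
    · exact Set.inter_subset_inter (Set.inter_subset_inter (preimage_mono Ioo_subset_Icc_self)
        (preimage_mono Ioo_subset_Icc_self)) (Set.inter_subset_inter
        (preimage_mono Ioo_subset_Icc_self) (preimage_mono Ioo_subset_Icc_self))
    · exact ((isOpen_Ioo.preimage k1).inter (isOpen_Ioo.preimage k2)).inter
        ((isOpen_Ioo.preimage k3).inter (isOpen_Ioo.preimage kf))
    · have : 0 < G := by linarith
      simp only [mem_inter_iff, mem_preimage, map_zero, mem_Ioo]
      simp [hs0, this]
  have h0 : (0 : E2) ∈ K := by
    rw [hK]; simp only [map_zero]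
    refine ⟨⟨⟨?_, ?_⟩, ?_, ?_⟩, ⟨?_, ?_⟩, ?_, ?_⟩ <;> linarith
  have hneg : ∀ x ∈ K, (-(1 / s)) • x ∈ K := by
    intro x hx
    rw [hK] at hx ⊢
    simp only [map_smul, smul_eq_mul]
    obtain ⟨⟨⟨h1, h2⟩, h3, h4⟩, ⟨h5, h6⟩, h7, h8⟩ := hx
    have i0 : 0 < 1 / s := by positivity
    have i1 : 1 / s ≤ 1 := by rw [div_le_one hs0]; exact hs1
    have i2 : 1 / s * s = 1 := by field_simp
    generalize 1 / s = i at i0 i1 i2 ⊢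
    have up : ∀ t : ℝ, -s ≤ t → -i * t ≤ 1 := by
      intro t ht
      have := mul_le_mul_of_nonneg_left ht i0.le
      linarith
    have dn : ∀ t : ℝ, t ≤ 1 → -s ≤ -i * t := by
      intro t ht
      have := mul_le_mul_of_nonneg_left ht i0.le
      linarith
    refine ⟨⟨⟨dn _ h2, up _ h1⟩, dn _ h4, up _ h3⟩, ⟨dn _ h6, up _ h5⟩, ?_, ?_⟩
    · have := mul_le_mul_of_nonneg_left (h8.trans hGs) i0.le
      linarith
    · have := mul_le_mul_of_nonneg_left h7 i0.le
      linarith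
  refine ⟨K, core K hconv hcomp hint h0 s hs1 hneg A1 A2 A3 f (m / (s + 1)) (n / (s + 1))
    (1 / (s + 1)) (by positivity) (by positivity) (by positivity) ?_ ?_ ?_ ?_ ?_
    (pt (-s) y1) (pt x2 (-s)) (pt 1 1) ?_ ?_ ?_ (p1 _ _) (p2 _ _) ?_ (pt (-1) 1) ?_ ?_ ?_ (1 + G)
    ?_ ρ hρ1 hρ2⟩
  · rw [← hmn]; field_simp
  · intro x; rw [e3]; ring
  · exact fun x hx => ((hK x).1 hx).1.1.2
  · exact fun x hx => ((hK x).1 hx).1.2.2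
  · exact fun x hx => ((hK x).1 hx).2.1.2
  · rw [hK, e3, ef, p1, p2]
    refine ⟨⟨⟨?_, ?_⟩, ?_, ?_⟩, ⟨?_, ?_⟩, ?_, ?_⟩ <;> linarith
  · rw [hK, e3, ef, p1, p2]
    refine ⟨⟨⟨?_, ?_⟩, ?_, ?_⟩, ⟨?_, ?_⟩, ?_, ?_⟩ <;> linarith
  · rw [hK, e3, ef, p1, p2]
    refine ⟨⟨⟨?_, ?_⟩, ?_, ?_⟩, ⟨?_, ?_⟩, ?_, ?_⟩ <;> linarith
  · rw [e3, p1, p2]; linarith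
  · rw [hK, e3, ef, p1, p2]
    refine ⟨⟨⟨?_, ?_⟩, ?_, ?_⟩, ⟨?_, ?_⟩, ?_, ?_⟩ <;> linarith
  · rw [hK, map_neg, map_neg, map_neg, map_neg, e3, ef, p1, p2]
    refine ⟨⟨⟨?_, ?_⟩, ?_, ?_⟩, ⟨?_, ?_⟩, ?_, ?_⟩ <;> linarith
  · rw [ef, p1, p2]; ring
  · intro x hx y hy
    have h1 := ((hK x).1 hx).2.2.2
    have h2 := ((hK y).1 hy).2.2.1
    linarith

/-- the family used for `s > φ` -/
theorem family (ρ s u : ℝ) (hs1 : 1 < s) (hs2 : s ≤ 2) (hs3 : s + 1 ≤ s ^ 2)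
    (hu1 : s - 1 ≤ u) (hu2 : u ≤ 3 - s) (hρ1 : 1 ≤ ρ)
    (hρ2 : ρ ≤ (s + 1) / 2 * ((s * u + 1 - s) * (s + 1 - u) / ((s ^ 2 - 1) * u))) :
    ∃ K C : Set E2, IsConvexBody K ∧ MinkCentered K ∧ minkAsym K = s ∧
      IsConvexBody C ∧ C = -C ∧ inrad K C + circum K C = diamB K C ∧
      diamB K C / widthB K C = ρ := by
  have hu0 : 0 < u := by linarith
  have hd : 0 < s * u + 1 - s := by nlinarith
  have hn : 0 < s + 1 - u := by linarith
  have hm : 0 < u + s - 1 := by linarith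
  have hq : 0 < s ^ 2 - 1 := by nlinarith
  have hD : 0 < (s * u + 1 - s) * (s + 1 - u) := by positivity
  have hc1 : 1 - (u + s - 1) / 2 * (s - 1) / (s * u + 1 - s)
      = (s + 1) * (u - s + 1) / (2 * (s * u + 1 - s)) := by
    obtain ⟨d, hdd⟩ : ∃ d, d = s * u + 1 - s := ⟨_, rfl⟩
    rw [← hdd] at hd ⊢
    field_simp
    rw [hdd]
    ring
  have eqA : (u + s - 1) / 2 * (s - 1) / (s * u + 1 - s) * s +
      (1 - (u + s - 1) / 2 * (s - 1) / (s * u + 1 - s)) *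
        (((u + s - 1) / 2 * s - 1) / ((s + 1 - u) / 2))
      = 2 * (s ^ 2 - 1) * u / ((s * u + 1 - s) * (s + 1 - u)) - 1 := by
    rw [hc1]
    obtain ⟨d, hdd⟩ : ∃ d, d = s * u + 1 - s := ⟨_, rfl⟩
    rw [← hdd] at hd ⊢
    field_simp
    rw [hdd]
    ring
  have eqB : -((u + s - 1) / 2 * (s - 1) / (s * u + 1 - s)) *
        (((s + 1 - u) / 2 * s - 1) / ((u + s - 1) / 2)) -
      (1 - (u + s - 1) / 2 * (s - 1) / (s * u + 1 - s)) * s = -1 := by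
    rw [hc1]
    obtain ⟨d, hdd⟩ : ∃ d, d = s * u + 1 - s := ⟨_, rfl⟩
    rw [← hdd] at hd ⊢
    field_simp
    rw [hdd]
    ring
  have hG1 : 1 ≤ 2 * (s ^ 2 - 1) * u / ((s * u + 1 - s) * (s + 1 - u)) - 1 := by
    rw [le_sub_iff_add_le, le_div_iff₀ hD]
    nlinarith [mul_nonneg (by linarith : (0:ℝ) ≤ s) (sq_nonneg (u - 1))]
  have hGs : 2 * (s ^ 2 - 1) * u / ((s * u + 1 - s) * (s + 1 - u)) - 1 ≤ s := by
    rw [sub_le_iff_le_add, div_le_iff₀ hD]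
    have h1 : s * u ^ 2 - (s ^ 2 + 1) * u + s ^ 2 - 1 ≤ 0 := by
      have h2 : s * u ^ 2 - (s ^ 2 + 1) * u + s ^ 2 - 1 = (u - (s - 1)) * (s * u - (s + 1)) := by
        ring
      rw [h2]
      apply mul_nonpos_of_nonneg_of_nonpos
      · linarith
      · nlinarith
    nlinarith [mul_nonneg (by linarith : (0:ℝ) ≤ s + 1) (neg_nonneg.2 h1)]
  refine concrete ρ s ((u + s - 1) / 2) ((s + 1 - u) / 2)
    ((u + s - 1) / 2 * (s - 1) / (s * u + 1 - s))
    (2 * (s ^ 2 - 1) * u / ((s * u + 1 - s) * (s + 1 - u)) - 1)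
    (((u + s - 1) / 2 * s - 1) / ((s + 1 - u) / 2)) (((s + 1 - u) / 2 * s - 1) / ((u + s - 1) / 2))
    hs1.le (by linarith) (by linarith) (by ring) (by linarith) (by linarith) ?_ ?_ hG1 hGs
    ?_ ?_ ?_ ?_ ?_ ?_ ?_ ?_ ?_ ?_ ?_ ?_ hρ1 ?_
  · have : 0 < s - 1 := by linarith
    positivity
  · have : 0 ≤ (s + 1) * (u - s + 1) / (2 * (s * u + 1 - s)) := by
      have : 0 ≤ u - s + 1 := by linarith
      positivity
    linarith
  · rw [le_div_iff₀ (by linarith)]; nlinarith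
  · rw [div_le_iff₀ (by linarith)]; nlinarith
  · rw [mul_div_cancel₀ _ (by linarith)]; linarith
  · rw [mul_div_cancel₀ _ (by linarith)]; linarith
  · rw [le_div_iff₀ (by linarith)]; nlinarith
  · rw [div_le_iff₀ (by linarith)]; nlinarith
  · rw [mul_div_cancel₀ _ (by linarith)]; linarith
  · rw [mul_div_cancel₀ _ (by linarith)]; linarith
  · rw [eqA]; linarith
  · rw [eqA]
  · rw [eqB]
  · rw [eqB]; linarith
  · have h1 : (1 + (2 * (s ^ 2 - 1) * u / ((s * u + 1 - s) * (s + 1 - u)) - 1)) =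
      2 * (s ^ 2 - 1) * u / ((s * u + 1 - s) * (s + 1 - u)) := by ring
    rw [h1]
    calc _ ≤ (s + 1) / 2 * ((s * u + 1 - s) * (s + 1 - u) / ((s ^ 2 - 1) * u)) *
        (2 * (s ^ 2 - 1) * u / ((s * u + 1 - s) * (s + 1 - u))) :=
          mul_le_mul_of_nonneg_right hρ2 (by positivity)
      _ = s + 1 := by field_simp

theorem cExpr2_eq (s u : ℝ) (hs1 : 1 < s) (hu0 : 0 < u) (hu : s * u ^ 2 = s ^ 2 - 1) :
    cExpr2 s = (s * u + 1 - s) * (s + 1 - u) / ((s ^ 2 - 1) * u) := by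
  have hsq : Real.sqrt (s * (s ^ 2 - 1)) = s * u := by
    rw [← hu, show s * (s * u ^ 2) = (s * u) ^ 2 by ring]
    exact Real.sqrt_sq (by positivity)
  have hq : 0 < s ^ 2 - 1 := by nlinarith
  rw [cExpr2, hsq]
  have h2 : 0 < s ^ 2 + 2 * s - 1 + 2 * (s * u) := by nlinarith [mul_pos (by linarith : 0 < s) hu0]
  rw [div_eq_div_iff (by positivity) (by positivity)]
  have e : (s * u + 1 - s) * (s + 1 - u) = (s ^ 2 + 2 * s - 1 - 2 * (s * u)) * u := by
    linear_combination (1 : ℝ) * hu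
  rw [e]
  linear_combination (-4 * s * (s ^ 2 - 1) * u) * hu * (-1)

theorem cExpr3_eq (s : ℝ) (hs1 : 1 < s) (hs2 : s ≤ 2) :
    cExpr3 s = (s * (3 - s) + 1 - s) * (s + 1 - (3 - s)) / ((s ^ 2 - 1) * (3 - s)) := by
  have h1 : s - 3 ≠ 0 := by linarith
  have h2 : 3 - s ≠ 0 := by linarith
  have h3 : s ^ 2 - 1 ≠ 0 := by nlinarith
  have h4 : s + 1 ≠ 0 := by linarith
  rw [cExpr3, div_eq_div_iff (by positivity) (by positivity)]
  ring

theorem phi_facts : 1.6 < phiR ∧ phiR < 1.62 ∧ phiR ^ 2 = phiR + 1 := by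
  have h5 : Real.sqrt 5 ^ 2 = 5 := Real.sq_sqrt (by norm_num)
  have h0 : 0 ≤ Real.sqrt 5 := Real.sqrt_nonneg 5
  unfold phiR
  refine ⟨?_, ?_, ?_⟩
  · have : 2.2 < Real.sqrt 5 := by nlinarith
    linarith
  · have : Real.sqrt 5 < 2.24 := by nlinarith
    linarith
  · linear_combination h5 / 4

theorem sHat_le (s : ℝ) (h1 : phiR < s) (hs : s ≤ 2) (h : s ≤ sHat) :
    0 ≤ s ^ 3 - 7 * s ^ 2 + 9 * s + 1 := by
  obtain ⟨f1, f2, f3⟩ := phi_facts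
  have hanti : ∀ a b : ℝ, phiR ≤ a → a ≤ b → b ≤ 2 →
      b ^ 3 - 7 * b ^ 2 + 9 * b + 1 ≤ a ^ 3 - 7 * a ^ 2 + 9 * a + 1 := by
    intro a b ha hab hb
    have : 0 ≤ (b - a) * (7 * (a + b) - 9 - (a ^ 2 + a * b + b ^ 2)) := by
      apply mul_nonneg (by linarith)
      nlinarith
    nlinarith
  have hivt : ∃ t ∈ Icc phiR 2, t ^ 3 - 7 * t ^ 2 + 9 * t + 1 = 0 := by
    have := intermediate_value_Icc' (a := phiR) (b := 2)
      (f := fun t : ℝ => t ^ 3 - 7 * t ^ 2 + 9 * t + 1) (by linarith) (by fun_prop)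
    obtain ⟨t, ht, h⟩ := this (show (0:ℝ) ∈ Icc _ _ from ⟨by norm_num, by
      nlinarith⟩)
    exact ⟨t, ht, h⟩
  obtain ⟨t, ⟨ht1, ht2⟩, ht⟩ := hivt
  have ht1' : phiR < t := by
    rcases ht1.lt_or_eq with h | h
    · exact h
    · rw [← h] at ht
      nlinarith
  have ht2' : t < 2 := by
    rcases ht2.lt_or_eq with h | h
    · exact h
    · rw [h] at ht
      norm_num at ht
  have hle : sHat ≤ t := by
    refine csInf_le ⟨phiR, fun x hx => hx.1.le⟩ ⟨ht1', ht2', ?_⟩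
    rw [cExpr2_eq t (3 - t) (by linarith) (by linarith) (by linarith),
      cExpr3_eq t (by linarith) (by linarith)]
  have := hanti s t h1.le (h.trans hle) ht2
  linarith

theorem stmt3 (ρ s : ℝ) (hs1 : 1 ≤ s) (hs2 : s ≤ 2)
    (hρ1 : 1 ≤ ρ) (hρ2 : ρ ≤ ((s + 1) / 2) * cFun s) :
    ∃ K C : Set E2, IsConvexBody K ∧ MinkCentered K ∧ minkAsym K = s ∧
      IsConvexBody C ∧ C = -C ∧ inrad K C + circum K C = diamB K C ∧
      diamB K C / widthB K C = ρ := by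
  obtain ⟨f1, f2, f3⟩ := phi_facts
  unfold cFun at hρ2
  split_ifs at hρ2 with hc1 hc2
  · have hss : s ^ 2 ≤ s + 1 := by nlinarith
    refine concrete ρ s (s / 2) (s / 2) (1 / 2) 1 (2 - s) (2 - s) hs1 ?_ ?_ ?_ ?_ ?_ ?_ ?_ ?_ ?_
      ?_ ?_ ?_ ?_ ?_ ?_ ?_ ?_ ?_ ?_ ?_ ?_ hρ1 ?_ <;> nlinarith
  · push Not at hc1
    have h1 : 1 < s := by linarith
    have hss : s + 1 ≤ s ^ 2 := by nlinarith
    have hpoly := sHat_le s hc1 hs2 hc2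
    have hq : 0 < s ^ 2 - 1 := by nlinarith
    have hw : 0 < (s ^ 2 - 1) / s := by positivity
    have hu0 := Real.sqrt_pos.2 hw
    have hu2 : s * Real.sqrt ((s ^ 2 - 1) / s) ^ 2 = s ^ 2 - 1 := by
      rw [Real.sq_sqrt hw.le]; field_simp
    rw [cExpr2_eq s _ h1 hu0 hu2] at hρ2
    refine family ρ s _ h1 hs2 hss ?_ ?_ hρ1 hρ2
    · apply Real.le_sqrt_of_sq_le
      rw [le_div_iff₀ (by linarith)]
      nlinarith
    · rw [Real.sqrt_le_left (by linarith), div_le_iff₀ (by linarith)]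
      nlinarith
  · push Not at hc1
    have h1 : 1 < s := by linarith
    have hss : s + 1 ≤ s ^ 2 := by nlinarith
    rw [cExpr3_eq s h1 hs2] at hρ2
    exact family ρ s _ h1 hs2 hss (by linarith) le_rfl hρ1 hρ2
end
end
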